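/- arXiv:2006.01116 — 2 statements merged into one kernel-verified Lean document; each statement's English description precedes it below -/
import Mathlib

section
/- Let D be a digraph with m arcs and minimum outdegree at least 4, let X, Y be a partition of V(D) with e(X) = 0, set θ := min{|θ(X₁,X₂)| : X₁,X₂ a partition of X}, X' := {x ∈ X : s(x) ≥ θ}, g := Σ_{x∈X∖X'} s(x), and b := (1/2)·Σ_{x∈X}(d(x) − s(x)). Let ε > 0 and suppose every y ∈ Y satisfies d(y) ≤ ε²m/4, and suppose |X'| = 3, written X' = {v₁,v₂,v₃} with Δⱼ := s(vⱼ) and Δ₁ ≥ Δ₂ ≥ Δ₃. Then either there exists a bipartition V(D) = V₁ ∪ V₂ with min{e(V₁,V₂), e(V₂,V₁)} ≥ (3/14 − ε)·m, or 2Δ₂ + 2Δ₃ − 3Δ₁ − 3g − b + 3·e(Y)/14 < 0, or both 6Δ₁ − 3Δ₂ − 3Δ₃ + 2g − b + 3·e(Y)/14 < 0 and 6Δ₃ − 3Δ₁ − 3Δ₂ − 3g + b/3 + 3·e(Y)/14 < 0. -/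
open Finset

/-- Number of arcs of the digraph `A` directed from a vertex of `S` to a vertex of `T`. -/
def dArcs {V : Type} [Fintype V] [DecidableEq V] (A : V → V → Prop) [DecidableRel A]
    (S T : Finset V) : ℕ :=
  ((S ×ˢ T).filter fun p => A p.1 p.2).card

/-- Outdegree of `x`. -/
def outDeg {V : Type} [Fintype V] (A : V → V → Prop) [DecidableRel A] (x : V) : ℕ :=
  (Finset.univ.filter fun y => A x y).card

/-- Indegree of `x`. -/
def inDeg {V : Type} [Fintype V] (A : V → V → Prop) [DecidableRel A] (x : V) : ℕ :=
  (Finset.univ.filter fun y => A y x).card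

/-- Degree of `x`: outdegree plus indegree. -/
def deg {V : Type} [Fintype V] (A : V → V → Prop) [DecidableRel A] (x : V) : ℕ :=
  outDeg A x + inDeg A x

/-- `s(x) = max{d⁺(x) − d⁻(x), d⁻(x) − d⁺(x)}`. -/
def sVal {V : Type} [Fintype V] (A : V → V → Prop) [DecidableRel A] (x : V) : ℤ :=
  max ((outDeg A x : ℤ) - (inDeg A x : ℤ)) ((inDeg A x : ℤ) - (outDeg A x : ℤ))

/-- The gap `θ(X₁,X₂) = (e(X₁,Y)+e(Y,X₂)) − (e(X₂,Y)+e(Y,X₁))`. -/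
def gap {V : Type} [Fintype V] [DecidableEq V] (A : V → V → Prop) [DecidableRel A]
    (X₁ X₂ Y : Finset V) : ℤ :=
  ((dArcs A X₁ Y : ℤ) + (dArcs A Y X₂ : ℤ)) - ((dArcs A X₂ Y : ℤ) + (dArcs A Y X₁ : ℤ))

/-- The expected weight of the arcs leaving a random set that contains each vertex `u`
independently with probability `x u`. -/
noncomputable def fracCut {V : Type} [Fintype V] (w : V → V → ℝ) (x : V → ℝ) : ℝ :=
  ∑ u, ∑ v, w u v * (x u * (1 - x v))

/-- The partial derivative of `fracCut w` at `x` in the direction of `y`. -/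
noncomputable def fracCutDeriv {V : Type} [Fintype V] (w : V → V → ℝ) (x : V → ℝ) (y : V) : ℝ :=
  ∑ v, w y v * (1 - x v) - ∑ u, w u y * x u

lemma fracCut_update {V : Type} [Fintype V] [DecidableEq V] (w : V → V → ℝ)
    (hw : ∀ v, w v v = 0) (x : V → ℝ) (y : V) (t : ℝ) :
    fracCut w (Function.update x y t) = fracCut w x + (t - x y) * fracCutDeriv w x y := by
  have hx : ∀ u, Function.update x y t u = x u + (if u = y then t - x y else 0) := by
    intro u
    by_cases h : u = y
    · subst h; simp
    · simp [h]
  have key : ∀ u v, w u v * (Function.update x y t u * (1 - Function.update x y t v)) =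
      w u v * (x u * (1 - x v)) + (if u = y then (t - x y) * (w y v * (1 - x v)) else 0)
        - (if v = y then (t - x y) * (w u y * x u) else 0) := by
    intro u v
    rw [hx, hx]
    by_cases hu : u = y <;> by_cases hv : v = y
    · subst hu; subst hv; simp [hw]
    · subst hu; simp [hv]; ring
    · subst hv; simp [hu]; ring
    · simp [hu, hv]
  have hswap : ∑ u, ∑ v, (if u = y then (t - x y) * (w y v * (1 - x v)) else 0) =
      (t - x y) * ∑ v, w y v * (1 - x v) := by
    rw [Finset.sum_comm]
    simp [Finset.mul_sum]
  unfold fracCut fracCutDeriv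
  simp_rw [key, Finset.sum_sub_distrib, Finset.sum_add_distrib]
  rw [hswap]
  simp only [Finset.sum_ite_eq', Finset.mem_univ, if_true, ← Finset.mul_sum]
  ring

lemma fracCutDeriv_sq_le {V : Type} [Fintype V] (w : V → V → ℝ) (hw : ∀ u v, 0 ≤ w u v)
    (x : V → ℝ) (hx : ∀ u, 0 ≤ x u ∧ x u ≤ 1) (y : V) :
    fracCutDeriv w x y ^ 2 ≤ (∑ v, w y v + ∑ u, w u y) ^ 2 := by
  have h1 : 0 ≤ ∑ v, w y v * (1 - x v) :=
    Finset.sum_nonneg fun v _ => mul_nonneg (hw _ _) (by linarith [(hx v).2])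
  have h2 : 0 ≤ ∑ u, w u y * x u :=
    Finset.sum_nonneg fun v _ => mul_nonneg (hw _ _) (hx v).1
  have h3 : ∑ v, w y v * (1 - x v) ≤ ∑ v, w y v :=
    Finset.sum_le_sum fun v _ => mul_le_of_le_one_right (hw _ _) (by linarith [(hx v).1])
  have h4 : ∑ u, w u y * x u ≤ ∑ u, w u y :=
    Finset.sum_le_sum fun v _ => mul_le_of_le_one_right (hw _ _) (hx v).2
  apply sq_le_sq'
  · unfold fracCutDeriv; linarith
  · unfold fracCutDeriv; linarith

lemma exists_endpoint_sq_le (p a c a' c' D : ℝ) (hp0 : 0 ≤ p) (hp1 : p ≤ 1)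
    (hc : c ^ 2 ≤ D) (hc' : c' ^ 2 ≤ D) :
    ∃ t : ℝ, (t = 0 ∨ t = 1) ∧
      (a + (t - p) * c) ^ 2 + (a' + (t - p) * c') ^ 2 ≤ a ^ 2 + a' ^ 2 + D / 2 := by
  by_contra! h
  have h0 := h 0 (Or.inl rfl)
  have h1 := h 1 (Or.inr rfl)
  have hpq : 0 ≤ p * (1 - p) := mul_nonneg hp0 (by linarith)
  have hpq' : p * (1 - p) ≤ 1 / 4 := by nlinarith [sq_nonneg (p - 1 / 2)]
  have hvar : p * (1 - p) * (c ^ 2 + c' ^ 2) ≤ D / 2 := by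
    have : p * (1 - p) * (c ^ 2 + c' ^ 2) ≤ 1 / 4 * (2 * D) :=
      mul_le_mul hpq' (by linarith) (by positivity) (by norm_num)
    linarith
  have havg : p * ((a + (1 - p) * c) ^ 2 + (a' + (1 - p) * c') ^ 2) +
      (1 - p) * ((a + (0 - p) * c) ^ 2 + (a' + (0 - p) * c') ^ 2) =
      a ^ 2 + a' ^ 2 + p * (1 - p) * (c ^ 2 + c' ^ 2) := by ring
  rcases eq_or_lt_of_le hp0 with h' | h'
  · subst h'
    linarith
  · nlinarith [mul_lt_mul_of_pos_left h1 h', mul_le_mul_of_nonneg_left h0.le (sub_nonneg.2 hp1)]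

/-- Rounding the coordinates in `S` changes two fractional cuts by at most the standard deviation
of the random rounding. -/
lemma exists_rounding {V : Type} [Fintype V] [DecidableEq V] (w w' : V → V → ℝ)
    (hw : ∀ u v, 0 ≤ w u v) (hw' : ∀ u v, 0 ≤ w' u v)
    (hirr : ∀ v, w v v = 0) (hirr' : ∀ v, w' v v = 0) (d : V → ℝ)
    (hd : ∀ y, ∑ v, w y v + ∑ u, w u y = d y) (hd' : ∀ y, ∑ v, w' y v + ∑ u, w' u y = d y)
    (t t' : ℝ) (S : Finset V) :
    ∀ x : V → ℝ, (∀ u, 0 ≤ x u ∧ x u ≤ 1) → ∃ z : V → ℝ, (∀ u, u ∉ S → z u = x u) ∧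
      (∀ u ∈ S, z u = 0 ∨ z u = 1) ∧
      (fracCut w z - t) ^ 2 + (fracCut w' z - t') ^ 2 ≤
        (fracCut w x - t) ^ 2 + (fracCut w' x - t') ^ 2 + ∑ y ∈ S, d y ^ 2 / 2 := by
  induction S using Finset.induction_on with
  | empty => exact fun x _ => ⟨x, by simp⟩
  | insert y S hy ih =>
    intro x hx
    obtain ⟨r, hr, hle⟩ := exists_endpoint_sq_le (x y) (fracCut w x - t) (fracCutDeriv w x y)
      (fracCut w' x - t') (fracCutDeriv w' x y) (d y ^ 2) (hx y).1 (hx y).2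
      (hd y ▸ fracCutDeriv_sq_le w hw x hx y) (hd' y ▸ fracCutDeriv_sq_le w' hw' x hx y)
    obtain ⟨z, hz, hz01, hzle⟩ := ih (Function.update x y r) (by
      intro u
      by_cases h : u = y
      · subst h
        rcases hr with rfl | rfl <;> simp
      · simpa [h] using hx u)
    refine ⟨z, fun u hu => ?_, fun u hu => ?_, ?_⟩
    · rw [Finset.mem_insert, not_or] at hu
      rw [hz u hu.2, Function.update_of_ne hu.1]
    · rcases Finset.mem_insert.1 hu with rfl | h
      · rw [hz u hy]
        simpa using hr
      · exact hz01 u h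
    · rw [fracCut_update w hirr, fracCut_update w' hirr'] at hzle
      rw [Finset.sum_insert hy]
      have e1 : fracCut w x + (r - x y) * fracCutDeriv w x y - t =
        fracCut w x - t + (r - x y) * fracCutDeriv w x y := by ring
      have e2 : fracCut w' x + (r - x y) * fracCutDeriv w' x y - t' =
        fracCut w' x - t' + (r - x y) * fracCutDeriv w' x y := by ring
      rw [e1, e2] at hzle
      linarith

/-- The fractional cut in which `S` is on the source side, `X \ S` on the target side, and every
vertex of `Y` is on the source side with probability `q`. -/
lemma fracCut_eq_of_const {V : Type} [Fintype V] [DecidableEq V] (w : V → V → ℝ)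
    (X Y S : Finset V) (hXY : X ∪ Y = Finset.univ) (hdXY : Disjoint X Y)
    (hX : ∀ u ∈ X, ∀ v ∈ X, w u v = 0) (q : ℝ) :
    fracCut w (fun u => if u ∈ X then (if u ∈ S then 1 else 0) else q) =
      ∑ u ∈ X, (if u ∈ S then (1 - q) * ∑ v, w u v else q * ∑ v, w v u) +
        q * (1 - q) * ∑ u ∈ Y, ∑ v ∈ Y, w u v := by
  have hY : ∀ u ∈ Y, u ∉ X := fun u hu h => Finset.disjoint_left.1 hdXY h hu
  have split : ∀ f : V → ℝ, ∑ u, f u = ∑ u ∈ X, f u + ∑ u ∈ Y, f u := by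
    intro f
    rw [← hXY, Finset.sum_union hdXY]
  have hout : ∀ u ∈ X, ∑ v, w u v = ∑ v ∈ Y, w u v := by
    intro u hu
    rw [split, Finset.sum_eq_zero (hX u hu), zero_add]
  have hin : ∀ u ∈ X, ∑ v, w v u = ∑ v ∈ Y, w v u := by
    intro u hu
    rw [split, Finset.sum_eq_zero (fun v hv => hX v hv u hu), zero_add]
  set x : V → ℝ := fun u => if u ∈ X then (if u ∈ S then 1 else 0) else q with hx
  have hxY : ∀ u ∈ Y, x u = q := fun u hu => by simp [hx, hY u hu]
  have hXrow : ∑ u ∈ X, ∑ v, w u v * (x u * (1 - x v)) =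
      ∑ u ∈ X, (if u ∈ S then (1 - q) * ∑ v, w u v else 0) := by
    refine Finset.sum_congr rfl fun u hu => ?_
    rw [split, Finset.sum_eq_zero (fun v hv => by rw [hX u hu v hv, zero_mul]), zero_add,
      hout u hu]
    by_cases h : u ∈ S
    · have hxu : x u = 1 := by simp [hx, hu, h]
      rw [if_pos h, Finset.mul_sum]
      refine Finset.sum_congr rfl fun v hv => ?_
      rw [hxu, hxY v hv]
      ring
    · have hxu : x u = 0 := by simp [hx, hu, h]
      simp [h, hxu]
  have hYX : ∑ u ∈ Y, ∑ v ∈ X, w u v * (x u * (1 - x v)) =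
      ∑ u ∈ X, (if u ∈ S then 0 else q * ∑ v, w v u) := by
    rw [Finset.sum_comm]
    refine Finset.sum_congr rfl fun u hu => ?_
    rw [hin u hu]
    by_cases h : u ∈ S
    · have hxu : x u = 1 := by simp [hx, hu, h]
      simp [h, hxu]
    · have hxu : x u = 0 := by simp [hx, hu, h]
      rw [if_neg h, Finset.mul_sum]
      refine Finset.sum_congr rfl fun v hv => ?_
      rw [hxu, hxY v hv]
      ring
  have hYY : ∑ u ∈ Y, ∑ v ∈ Y, w u v * (x u * (1 - x v)) =
      q * (1 - q) * ∑ u ∈ Y, ∑ v ∈ Y, w u v := by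
    simp_rw [Finset.mul_sum]
    refine Finset.sum_congr rfl fun u hu => Finset.sum_congr rfl fun v hv => ?_
    rw [hxY u hu, hxY v hv]
    ring
  have hYrow : ∑ u ∈ Y, ∑ v, w u v * (x u * (1 - x v)) =
      ∑ u ∈ Y, ∑ v ∈ X, w u v * (x u * (1 - x v)) +
        ∑ u ∈ Y, ∑ v ∈ Y, w u v * (x u * (1 - x v)) := by
    rw [← Finset.sum_add_distrib]
    exact Finset.sum_congr rfl fun u _ => split _
  rw [fracCut, split, hXrow, hYrow, hYX, hYY, ← add_assoc, ← Finset.sum_add_distrib]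
  congr 1
  refine Finset.sum_congr rfl fun u _ => ?_
  by_cases h : u ∈ S <;> simp [h]

/-- The `0`/`1`-valued weight function of the arcs of `A`. -/
noncomputable def arcWeight {V : Type} (A : V → V → Prop) [DecidableRel A] (u v : V) : ℝ :=
  if A u v then 1 else 0

lemma dArcs_eq_sum_arcWeight {V : Type} [Fintype V] [DecidableEq V] (A : V → V → Prop)
    [DecidableRel A] (S T : Finset V) :
    (dArcs A S T : ℝ) = ∑ u ∈ S, ∑ v ∈ T, arcWeight A u v := by
  rw [dArcs, Finset.card_filter, Finset.sum_product]
  push_cast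
  rfl

lemma outDeg_eq_sum_arcWeight {V : Type} [Fintype V] (A : V → V → Prop)
    [DecidableRel A] (u : V) : (outDeg A u : ℝ) = ∑ v, arcWeight A u v := by
  simp [outDeg, arcWeight]

lemma inDeg_eq_sum_arcWeight {V : Type} [Fintype V] (A : V → V → Prop)
    [DecidableRel A] (u : V) : (inDeg A u : ℝ) = ∑ v, arcWeight A v u := by
  simp [inDeg, arcWeight]

lemma fracCut_indicator {V : Type} [Fintype V] [DecidableEq V] (A : V → V → Prop)
    [DecidableRel A] (S : Finset V) :
    fracCut (arcWeight A) (fun u => if u ∈ S then 1 else 0) = dArcs A S Sᶜ := by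
  rw [dArcs_eq_sum_arcWeight, fracCut, ← Finset.sum_add_sum_compl S]
  rw [Finset.sum_eq_zero (s := Sᶜ) (fun u hu => by simp [Finset.mem_compl.1 hu]), add_zero]
  refine Finset.sum_congr rfl fun u hu => ?_
  rw [← Finset.sum_add_sum_compl S, Finset.sum_eq_zero (s := S) (fun v hv => by simp [hv]),
    zero_add]
  refine Finset.sum_congr rfl fun v hv => ?_
  simp [hu, Finset.mem_compl.1 hv]

lemma fracCut_flip_indicator {V : Type} [Fintype V] [DecidableEq V] (A : V → V → Prop)
    [DecidableRel A] (S : Finset V) :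
    fracCut (fun u v => arcWeight A v u) (fun u => if u ∈ S then 1 else 0) = dArcs A Sᶜ S := by
  have h := fracCut_indicator (fun u v => A v u) S
  rw [dArcs_eq_sum_arcWeight] at h ⊢
  rw [Finset.sum_comm]
  exact h

/-- If the placement of `S` and `X \ S` on different sides, with every vertex of `Y` joining `S`
with probability `5 / 14`, cuts at least `3 / 14` of the arcs in each direction on average, then
some bipartition cuts almost that many. -/
lemma exists_bipartition_of_placement {V : Type} [Fintype V] [DecidableEq V] (A : V → V → Prop)
    [DecidableRel A] (hirr : ∀ v, ¬ A v v) (m : ℕ) (hm : m = dArcs A Finset.univ Finset.univ)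
    (X Y S : Finset V) (hXY : X ∪ Y = Finset.univ) (hdXY : Disjoint X Y)
    (heX : dArcs A X X = 0) (ε : ℝ) (hε : 0 < ε)
    (hdeg : ∀ y ∈ Y, (deg A y : ℝ) ≤ ε ^ 2 * m / 4)
    (h₁ : 0 ≤ ∑ u ∈ X, (if u ∈ S then 6 * (outDeg A u : ℝ) - 3 * inDeg A u
      else 2 * (inDeg A u : ℝ) - 3 * outDeg A u) + 3 * (dArcs A Y Y : ℝ) / 14)
    (h₂ : 0 ≤ ∑ u ∈ X, (if u ∈ S then 6 * (inDeg A u : ℝ) - 3 * outDeg A u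
      else 2 * (outDeg A u : ℝ) - 3 * inDeg A u) + 3 * (dArcs A Y Y : ℝ) / 14) :
    ∃ V₁ V₂ : Finset V, V₁ ∪ V₂ = Finset.univ ∧ Disjoint V₁ V₂ ∧
        (3 / 14 - ε) * (m : ℝ) ≤ min (dArcs A V₁ V₂ : ℝ) (dArcs A V₂ V₁ : ℝ) := by
  have hX : ∀ u ∈ X, ∀ v ∈ X, ¬ A u v := by
    intro u hu v hv h
    rw [dArcs, Finset.card_eq_zero, Finset.filter_eq_empty_iff] at heX
    exact heX (Finset.mk_mem_product hu hv) h
  have hw0 : ∀ u v, 0 ≤ arcWeight A u v := by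
    intro u v
    unfold arcWeight
    split_ifs <;> norm_num
  have hwX : ∀ u ∈ X, ∀ v ∈ X, arcWeight A u v = 0 := fun u hu v hv => by
    simp [arcWeight, hX u hu v hv]
  have hwirr : ∀ v, arcWeight A v v = 0 := fun v => by simp [arcWeight, hirr v]
  have hdegsum : ∀ y, (deg A y : ℝ) = ∑ v, arcWeight A y v + ∑ u, arcWeight A u y := by
    intro y
    rw [deg, Nat.cast_add, outDeg_eq_sum_arcWeight, inDeg_eq_sum_arcWeight]
  have hmsum : (m : ℝ) = ∑ u, ∑ v, arcWeight A u v := by rw [hm, dArcs_eq_sum_arcWeight]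
  have htotal : (m : ℝ) = ∑ u ∈ X, ((outDeg A u : ℝ) + inDeg A u) + dArcs A Y Y := by
    have split : ∀ f : V → ℝ, ∑ u, f u = ∑ u ∈ X, f u + ∑ u ∈ Y, f u := by
      intro f
      rw [← hXY, Finset.sum_union hdXY]
    have hin : ∑ u ∈ X, (inDeg A u : ℝ) = ∑ u ∈ Y, ∑ v ∈ X, arcWeight A u v := by
      rw [Finset.sum_comm]
      refine Finset.sum_congr rfl fun u hu => ?_
      rw [inDeg_eq_sum_arcWeight, split, Finset.sum_eq_zero (fun v hv => hwX v hv u hu), zero_add]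
    rw [hmsum, split, Finset.sum_add_distrib, hin, dArcs_eq_sum_arcWeight, add_assoc,
      ← Finset.sum_add_distrib]
    simp_rw [outDeg_eq_sum_arcWeight]
    congr 1
    exact Finset.sum_congr rfl fun u _ => split _
  set x : V → ℝ := fun u => if u ∈ X then (if u ∈ S then 1 else 0) else 5 / 14 with hx
  have hcut : 3 / 14 * (m : ℝ) ≤ fracCut (arcWeight A) x := by
    rw [hx, fracCut_eq_of_const _ X Y S hXY hdXY hwX, ← dArcs_eq_sum_arcWeight, htotal]
    simp_rw [← outDeg_eq_sum_arcWeight, ← inDeg_eq_sum_arcWeight]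
    have : ∑ u ∈ X, (if u ∈ S then (1 - 5 / 14 : ℝ) * outDeg A u else 5 / 14 * inDeg A u) =
        (∑ u ∈ X, (if u ∈ S then 6 * (outDeg A u : ℝ) - 3 * inDeg A u
          else 2 * (inDeg A u : ℝ) - 3 * outDeg A u)) / 14 +
        3 / 14 * ∑ u ∈ X, ((outDeg A u : ℝ) + inDeg A u) := by
      rw [Finset.sum_div, Finset.mul_sum, ← Finset.sum_add_distrib]
      refine Finset.sum_congr rfl fun u _ => ?_
      split_ifs <;> ring
    rw [this]
    linarith
  have hcut' : 3 / 14 * (m : ℝ) ≤ fracCut (fun u v => arcWeight A v u) x := by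
    rw [hx, fracCut_eq_of_const _ X Y S hXY hdXY (fun u hu v hv => hwX v hv u hu),
      Finset.sum_comm (s := Y), ← dArcs_eq_sum_arcWeight, htotal]
    simp_rw [← outDeg_eq_sum_arcWeight, ← inDeg_eq_sum_arcWeight]
    have : ∑ u ∈ X, (if u ∈ S then (1 - 5 / 14 : ℝ) * inDeg A u else 5 / 14 * outDeg A u) =
        (∑ u ∈ X, (if u ∈ S then 6 * (inDeg A u : ℝ) - 3 * outDeg A u
          else 2 * (outDeg A u : ℝ) - 3 * inDeg A u)) / 14 +
        3 / 14 * ∑ u ∈ X, ((outDeg A u : ℝ) + inDeg A u) := by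
      rw [Finset.sum_div, Finset.mul_sum, ← Finset.sum_add_distrib]
      refine Finset.sum_congr rfl fun u _ => ?_
      split_ifs <;> ring
    rw [this]
    linarith
  obtain ⟨z, hz, hz01, hzle⟩ := exists_rounding (arcWeight A) (fun u v => arcWeight A v u)
    hw0 (fun u v => hw0 v u) hwirr hwirr (fun y => (deg A y : ℝ)) (fun y => (hdegsum y).symm)
    (fun y => by rw [hdegsum y, add_comm]) (fracCut (arcWeight A) x)
    (fracCut (fun u v => arcWeight A v u) x) Y x (by
      intro u
      simp only [hx]
      split_ifs <;> norm_num)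
  have hz01' : ∀ u, z u = 0 ∨ z u = 1 := by
    intro u
    by_cases hu : u ∈ Y
    · exact hz01 u hu
    · have huX : u ∈ X := by
        have := Finset.mem_univ u
        rw [← hXY, Finset.mem_union] at this
        exact this.resolve_right hu
      rw [hz u hu]
      by_cases h : u ∈ S <;> simp [hx, huX, h]
  have hvar : ∑ y ∈ Y, (deg A y : ℝ) ^ 2 / 2 ≤ (ε * m / 2) ^ 2 := by
    have hall : ∑ y, (deg A y : ℝ) = 2 * m := by
      simp_rw [hdegsum, Finset.sum_add_distrib]
      rw [Finset.sum_comm (f := fun x u => arcWeight A u x), ← hmsum]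
      ring
    have hsub : ∑ y ∈ Y, (deg A y : ℝ) ≤ 2 * m := by
      rw [← hall]
      exact Finset.sum_le_sum_of_subset_of_nonneg (Finset.subset_univ _)
        fun _ _ _ => Nat.cast_nonneg _
    calc ∑ y ∈ Y, (deg A y : ℝ) ^ 2 / 2 ≤ ∑ y ∈ Y, ε ^ 2 * m / 8 * (deg A y : ℝ) := by
          refine Finset.sum_le_sum fun y hy => ?_
          nlinarith [hdeg y hy, (Nat.cast_nonneg (deg A y) : (0 : ℝ) ≤ deg A y)]
      _ = ε ^ 2 * m / 8 * ∑ y ∈ Y, (deg A y : ℝ) := by rw [Finset.mul_sum]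
      _ ≤ ε ^ 2 * m / 8 * (2 * m) := by gcongr
      _ = (ε * m / 2) ^ 2 := by ring
  have hεm : 0 ≤ ε * m / 2 := by positivity
  simp only [sub_self, ne_eq, OfNat.ofNat_ne_zero, not_false_eq_true, zero_pow, zero_add] at hzle
  have hdev := abs_le_of_sq_le_sq' (le_trans (by
    linarith [sq_nonneg (fracCut (fun u v => arcWeight A v u) z -
      fracCut (fun u v => arcWeight A v u) x)]) hvar) hεm
    (a := fracCut (arcWeight A) z - fracCut (arcWeight A) x)
  have hdev' := abs_le_of_sq_le_sq' (le_trans (by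
    linarith [sq_nonneg (fracCut (arcWeight A) z - fracCut (arcWeight A) x)]) hvar) hεm
    (a := fracCut (fun u v => arcWeight A v u) z -
      fracCut (fun u v => arcWeight A v u) x)
  set T : Finset V := Finset.univ.filter fun u => z u = 1 with hT
  have hzT : z = fun u => if u ∈ T then 1 else 0 := by
    funext u
    rcases hz01' u with h | h <;> simp [hT, h]
  rw [hzT, fracCut_indicator] at hdev
  rw [hzT, fracCut_flip_indicator] at hdev'
  refine ⟨T, Tᶜ, Finset.union_compl T, disjoint_compl_right, le_min ?_ ?_⟩
  · linarith [hdev.1]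
  · linarith [hdev'.1]

/-- Placing `j` against `k` and `l` on the side of larger weight. In the conclusion, a vertex `u`
of `S` contributes `6 * o u - 3 * i u` to the first sum, any other vertex `2 * i u - 3 * o u`, and
the second sum has `o` and `i` exchanged. -/
lemma exists_placement {V : Type} [DecidableEq V] (X : Finset V) (j k l : V)
    (hjk : j ≠ k) (hjl : j ≠ l) (hkl : k ≠ l) (hsub : {j, k, l} ⊆ X) (K : ℝ) (o i s b : V → ℝ)
    (hb : ∀ u, 0 ≤ b u) (hs : ∀ u, 0 ≤ s u)
    (ho : ∀ u, (o u = s u + b u ∧ i u = b u) ∨ (i u = s u + b u ∧ o u = b u))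
    (h : (0 ≤ 6 * s j - 3 * s k - 3 * s l + 2 * ∑ u ∈ X \ {j, k, l}, s u - ∑ u ∈ X, b u + K ∧
        0 ≤ 2 * s k + 2 * s l - 3 * s j - 3 * ∑ u ∈ X \ {j, k, l}, s u - ∑ u ∈ X, b u + K) ∨
      (0 ≤ 6 * s j - 3 * s k - 3 * s l - 3 * ∑ u ∈ X \ {j, k, l}, s u - ∑ u ∈ X, b u +
          4 * (b j + ∑ u ∈ X \ {j, k, l}, b u) + K ∧
        0 ≤ 2 * s k + 2 * s l - 3 * s j - 3 * ∑ u ∈ X \ {j, k, l}, s u - ∑ u ∈ X, b u +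
          4 * (b j + ∑ u ∈ X \ {j, k, l}, b u) + K)) :
    ∃ S : Finset V,
      0 ≤ ∑ u ∈ X, (if u ∈ S then 6 * o u - 3 * i u else 2 * i u - 3 * o u) + K ∧
      0 ≤ ∑ u ∈ X, (if u ∈ S then 6 * i u - 3 * o u else 2 * o u - 3 * i u) + K := by
  wlog hj : o j = s j + b j ∧ i j = b j generalizing o i
  · obtain ⟨S, hS₁, hS₂⟩ := this i o (fun u => (ho u).symm) ((ho j).resolve_left hj)
    exact ⟨S, hS₂, hS₁⟩
  have split : ∀ f : V → ℝ, ∑ u ∈ X, f u = f j + f k + f l + ∑ u ∈ X \ {j, k, l}, f u := by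
    intro f
    rw [← Finset.sum_sdiff hsub, Finset.sum_insert (by simp [hjk, hjl]),
      Finset.sum_insert (by simp [hkl]), Finset.sum_singleton]
    ring
  have hR : ∀ u ∈ X \ {j, k, l}, u ≠ j ∧ u ≠ k ∧ u ≠ l := by
    intro u hu
    simpa [not_or] using (Finset.mem_sdiff.1 hu).2
  have bound : ∀ S : Finset V, j ∈ S → (k ∈ S ↔ o k < i k) → (l ∈ S ↔ o l < i l) →
      ∀ r r' : V → ℝ,
      (∀ u ∈ X \ {j, k, l}, r u ≤ (if u ∈ S then 6 * o u - 3 * i u else 2 * i u - 3 * o u)) →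
      (∀ u ∈ X \ {j, k, l}, r' u ≤ (if u ∈ S then 6 * i u - 3 * o u else 2 * o u - 3 * i u)) →
      6 * s j + 3 * b j - 3 * s k - b k - 3 * s l - b l + ∑ u ∈ X \ {j, k, l}, r u ≤
        ∑ u ∈ X, (if u ∈ S then 6 * o u - 3 * i u else 2 * i u - 3 * o u) ∧
      3 * b j - 3 * s j + 2 * s k - b k + 2 * s l - b l + ∑ u ∈ X \ {j, k, l}, r' u ≤
        ∑ u ∈ X, (if u ∈ S then 6 * i u - 3 * o u else 2 * o u - 3 * i u) := by
    intro S hjS hkS hlS r r' hr hr'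
    have hopp : ∀ v, (v ∈ S ↔ o v < i v) →
        -3 * s v - b v ≤ (if v ∈ S then 6 * o v - 3 * i v else 2 * i v - 3 * o v) ∧
        2 * s v - b v ≤ (if v ∈ S then 6 * i v - 3 * o v else 2 * o v - 3 * i v) := by
      intro v hv
      have := hb v
      have := hs v
      by_cases h' : v ∈ S
      · have := hv.1 h'
        rw [if_pos h', if_pos h']
        rcases ho v with h | h <;> constructor <;> linarith
      · have := not_lt.1 (mt hv.2 h')
        rw [if_neg h', if_neg h']
        rcases ho v with h | h <;> constructor <;> linarith
    have hk := hopp k hkS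
    have hl := hopp l hlS
    have hsum := Finset.sum_le_sum hr
    have hsum' := Finset.sum_le_sum hr'
    rw [split, split (fun u => if u ∈ S then 6 * i u - 3 * o u else 2 * o u - 3 * i u)]
    simp only [if_pos hjS]
    constructor <;> linarith [hj.1, hj.2, hk.1, hk.2, hl.1, hl.2]
  rw [split b] at h
  rcases h with ⟨h₁, h₂⟩ | ⟨h₁, h₂⟩
  · obtain ⟨hS, hS'⟩ := bound (X.filter fun u => u = j ∨ ((u = k ∨ u = l) ∧ o u < i u) ∨
        (u ≠ k ∧ u ≠ l ∧ i u ≤ o u)) (by simp [hsub (by simp : j ∈ ({j, k, l} : Finset V))])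
      (by simp [hsub (by simp : k ∈ ({j, k, l} : Finset V)), hjk.symm])
      (by simp [hsub (by simp : l ∈ ({j, k, l} : Finset V)), hjl.symm])
      (fun u => 2 * s u - b u) (fun u => -3 * s u - b u)
      (by
        intro u hu
        have hne := hR u hu
        have := hb u
        have := hs u
        simp only [Finset.mem_filter, (Finset.mem_sdiff.1 hu).1, hne, true_and, false_or,
          false_and, ne_eq, not_false_eq_true]
        split_ifs <;> rcases ho u with h | h <;> linarith)
      (by
        intro u hu
        have hne := hR u hu
        have := hb u
        have := hs u
        simp only [Finset.mem_filter, (Finset.mem_sdiff.1 hu).1, hne, true_and, false_or,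
          false_and, ne_eq, not_false_eq_true]
        split_ifs <;> rcases ho u with h | h <;> linarith)
    rw [Finset.sum_sub_distrib, ← Finset.mul_sum] at hS hS'
    have := hb j
    exact ⟨_, by linarith, by linarith⟩
  · obtain ⟨hS, hS'⟩ := bound (X.filter fun u => u = j ∨ ((u = k ∨ u = l) ∧ o u < i u) ∨
        (u ≠ k ∧ u ≠ l)) (by simp [hsub (by simp : j ∈ ({j, k, l} : Finset V))])
      (by simp [hsub (by simp : k ∈ ({j, k, l} : Finset V)), hjk.symm])
      (by simp [hsub (by simp : l ∈ ({j, k, l} : Finset V)), hjl.symm])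
      (fun u => -3 * s u + 3 * b u) (fun u => -3 * s u + 3 * b u)
      (by
        intro u hu
        have hne := hR u hu
        have := hs u
        rw [if_pos (by simp [(Finset.mem_sdiff.1 hu).1, hne])]
        rcases ho u with h | h <;> linarith)
      (by
        intro u hu
        have hne := hR u hu
        have := hs u
        rw [if_pos (by simp [(Finset.mem_sdiff.1 hu).1, hne])]
        rcases ho u with h | h <;> linarith)
    rw [Finset.sum_add_distrib, ← Finset.mul_sum, ← Finset.mul_sum] at hS hS'
    exact ⟨_, by linarith, by linarith⟩

/-- Lemma 3.2(4): the case `d = 4`, `|X'| = 3`. -/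
theorem stmt11 {V : Type} [Fintype V] [DecidableEq V] (A : V → V → Prop) [DecidableRel A]
    (hirr : ∀ v, ¬ A v v)
    (m : ℕ) (hm : m = dArcs A Finset.univ Finset.univ)
    (hout : ∀ x, 4 ≤ outDeg A x)
    (X Y : Finset V) (hXY : X ∪ Y = Finset.univ) (hdXY : Disjoint X Y)
    (heX : dArcs A X X = 0)
    (θ : ℤ) (hθ : IsLeast {t : ℤ | ∃ X₁ ⊆ X, t = |gap A X₁ (X \ X₁) Y|} θ)
    (X' : Finset V) (hX' : X' = X.filter fun x => θ ≤ sVal A x)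
    (g : ℤ) (hg : g = ∑ x ∈ X \ X', sVal A x)
    (b : ℝ) (hb : b = (∑ x ∈ X, ((deg A x : ℝ) - (sVal A x : ℝ))) / 2)
    (v₁ v₂ v₃ : V) (hcard : X'.card = 3) (hv : X' = {v₁, v₂, v₃})
    (h12 : sVal A v₂ ≤ sVal A v₁) (h23 : sVal A v₃ ≤ sVal A v₂)
    (ε : ℝ) (hε : 0 < ε) (hdeg : ∀ y ∈ Y, (deg A y : ℝ) ≤ ε ^ 2 * m / 4) :
    (∃ V₁ V₂ : Finset V, V₁ ∪ V₂ = Finset.univ ∧ Disjoint V₁ V₂ ∧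
        (3 / 14 - ε) * (m : ℝ) ≤ min (dArcs A V₁ V₂ : ℝ) (dArcs A V₂ V₁ : ℝ)) ∨
      (2 * (sVal A v₂ : ℝ) + 2 * (sVal A v₃ : ℝ) - 3 * (sVal A v₁ : ℝ) - 3 * (g : ℝ) - b +
        3 * (dArcs A Y Y : ℝ) / 14 < 0) ∨
      ((6 * (sVal A v₁ : ℝ) - 3 * (sVal A v₂ : ℝ) - 3 * (sVal A v₃ : ℝ) + 2 * (g : ℝ) - b +
          3 * (dArcs A Y Y : ℝ) / 14 < 0) ∧
        (6 * (sVal A v₃ : ℝ) - 3 * (sVal A v₁ : ℝ) - 3 * (sVal A v₂ : ℝ) - 3 * (g : ℝ) + b / 3 +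
          3 * (dArcs A Y Y : ℝ) / 14 < 0)) := by
  set K : ℝ := 3 * (dArcs A Y Y : ℝ) / 14 with hK
  set s : V → ℝ := fun u => (sVal A u : ℝ) with hs
  set c : V → ℝ := fun u => ((deg A u : ℝ) - (sVal A u : ℝ)) / 2 with hc
  have hdegree : ∀ u, (deg A u : ℝ) = outDeg A u + inDeg A u := fun u => by
    rw [deg, Nat.cast_add]
  have hsVal : ∀ u, (sVal A u : ℝ) =
      max ((outDeg A u : ℝ) - inDeg A u) ((inDeg A u : ℝ) - outDeg A u) := fun u => by
    rw [sVal]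
    push_cast
    rfl
  have ho : ∀ u, ((outDeg A u : ℝ) = s u + c u ∧ (inDeg A u : ℝ) = c u) ∨
      ((inDeg A u : ℝ) = s u + c u ∧ (outDeg A u : ℝ) = c u) := by
    intro u
    simp only [hs, hc, hdegree, hsVal]
    rcases le_total ((outDeg A u : ℝ) - inDeg A u) ((inDeg A u : ℝ) - outDeg A u) with h | h
    · rw [max_eq_right h]
      right; constructor <;> ring
    · rw [max_eq_left h]
      left; constructor <;> ring
  have hs0 : ∀ u, 0 ≤ s u := by
    intro u
    simp only [hs, hsVal]
    rcases le_total (outDeg A u : ℝ) (inDeg A u : ℝ) with h | h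
    · exact le_max_of_le_right (by linarith)
    · exact le_max_of_le_left (by linarith)
  have hc0 : ∀ u, 0 ≤ c u := by
    intro u
    rcases ho u with h | h
    · exact h.2 ▸ Nat.cast_nonneg _
    · exact h.2 ▸ Nat.cast_nonneg _
  have hbc : b = ∑ u ∈ X, c u := by rw [hb, Finset.sum_div]
  have hgs : (g : ℝ) = ∑ u ∈ X \ {v₁, v₂, v₃}, s u := by
    rw [hg, hv]
    push_cast
    rfl
  have hsub : ({v₁, v₂, v₃} : Finset V) ⊆ X := by
    rw [← hv, hX']
    exact Finset.filter_subset _ _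
  obtain ⟨h12', h13', h23'⟩ : v₁ ≠ v₂ ∧ v₁ ≠ v₃ ∧ v₂ ≠ v₃ := by
    rw [hv] at hcard
    refine ⟨?_, ?_, ?_⟩ <;> rintro rfl
    · have := Finset.card_le_two (a := v₁) (b := v₃)
      simp at hcard
      omega
    · have := Finset.card_le_two (a := v₂) (b := v₁)
      rw [Finset.insert_eq_of_mem (by simp)] at hcard
      omega
    · have := Finset.card_le_two (a := v₁) (b := v₂)
      simp at hcard
      omega
  have hs12 : s v₂ ≤ s v₁ := Int.cast_le.2 h12
  have hs23 : s v₃ ≤ s v₂ := Int.cast_le.2 h23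
  rw [or_iff_not_imp_right]
  intro hneg
  rw [not_or, not_and_or, not_lt, not_lt, not_lt] at hneg
  obtain ⟨hA, hBC⟩ := hneg
  suffices h : ∃ S : Finset V,
      0 ≤ ∑ u ∈ X, (if u ∈ S then 6 * (outDeg A u : ℝ) - 3 * inDeg A u
        else 2 * (inDeg A u : ℝ) - 3 * outDeg A u) + K ∧
      0 ≤ ∑ u ∈ X, (if u ∈ S then 6 * (inDeg A u : ℝ) - 3 * outDeg A u
        else 2 * (outDeg A u : ℝ) - 3 * inDeg A u) + K by
    obtain ⟨S, hS₁, hS₂⟩ := h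
    exact exists_bipartition_of_placement A hirr m hm X Y S hXY hdXY heX ε hε hdeg hS₁ hS₂
  rw [hbc, hgs] at hA hBC
  rcases hBC with hB | hC
  · exact exists_placement X v₁ v₂ v₃ h12' h13' h23' hsub K _ _ s c hc0 hs0 ho
      (Or.inl ⟨hB, hA⟩)
  · have hcsum : ∑ u ∈ X, c u = c v₁ + c v₂ + c v₃ + ∑ u ∈ X \ {v₁, v₂, v₃}, c u := by
      rw [← Finset.sum_sdiff hsub, Finset.sum_insert (by simp [h12', h13']),
        Finset.sum_insert (by simp [h23']), Finset.sum_singleton]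
      ring
    have hR0 : 0 ≤ ∑ u ∈ X \ {v₁, v₂, v₃}, c u := Finset.sum_nonneg fun u _ => hc0 u
    have h1 := hc0 v₁
    have h2 := hc0 v₂
    have h3 := hc0 v₃
    have hmax : (c v₂ ≤ c v₁ ∧ c v₃ ≤ c v₁) ∨ (c v₁ ≤ c v₂ ∧ c v₃ ≤ c v₂) ∨
        (c v₁ ≤ c v₃ ∧ c v₂ ≤ c v₃) := by
      grind
    rcases hmax with ⟨ha, hb'⟩ | ⟨ha, hb'⟩ | ⟨ha, hb'⟩
    · exact exists_placement X v₁ v₂ v₃ h12' h13' h23' hsub K _ _ s c hc0 hs0 ho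
        (Or.inr ⟨by linarith, by linarith⟩)
    · have hset : ({v₂, v₁, v₃} : Finset V) = {v₁, v₂, v₃} := Finset.insert_comm _ _ _
      exact exists_placement X v₂ v₁ v₃ h12'.symm h23' h13' (hset ▸ hsub) K _ _ s c hc0 hs0 ho
        (Or.inr (by rw [hset]; exact ⟨by linarith, by linarith⟩))
    · have hset : ({v₃, v₁, v₂} : Finset V) = {v₁, v₂, v₃} := by
        ext u
        simp only [Finset.mem_insert, Finset.mem_singleton]
        tauto
      exact exists_placement X v₃ v₁ v₂ h13'.symm h23'.symm h12' (hset ▸ hsub) K _ _ s c hc0 hs0 ho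
        (Or.inr (by rw [hset]; exact ⟨by linarith, by linarith⟩))
end

section
/- Let d ≥ 4 be an integer and ε > 0 a real. Let D be a digraph with m arcs and minimum outdegree at least d, and let X, Y be a partition of V(D) with e(X) = 0 such that every y ∈ Y satisfies d(y) ≤ ε²m/4. Set θ := min{|θ(X₁,X₂)| : X₁,X₂ a partition of X} and X' := {x ∈ X : s(x) ≥ θ}. If |X'| ≥ d, then V(D) admits a bipartition V₁, V₂ with min{e(V₁,V₂), e(V₂,V₁)} ≥ ((d−1)/(2(2d−1)) − ε)·m. -/
open Finset

/-- A real `v` with `|v| < θ + ∑ σ` can be brought below `θ` in absolute value by a signed sum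
of numbers `σ x ∈ [0, θ)`; the signed sum is written `2 ∑_U σ - ∑_S σ`. -/
theorem exists_signed_sum_abs_lt {V : Type} [DecidableEq V] (σ : V → ℝ) (θ : ℝ) (S : Finset V)
    (h0 : ∀ x ∈ S, 0 ≤ σ x) (hlt : ∀ x ∈ S, σ x < θ) (v : ℝ) (hv : |v| < θ + ∑ x ∈ S, σ x) :
    ∃ U ⊆ S, |v + (2 * ∑ x ∈ U, σ x - ∑ x ∈ S, σ x)| < θ := by
  induction S using Finset.induction_on generalizing v with
  | empty => exact ⟨∅, Subset.rfl, by simpa using hv⟩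
  | insert s S hs ih =>
    have ih' := ih (fun x hx => h0 x (mem_insert_of_mem hx))
      (fun x hx => hlt x (mem_insert_of_mem hx))
    have hs0 := h0 s (mem_insert_self s S)
    have hs1 := hlt s (mem_insert_self s S)
    have hw : 0 ≤ ∑ x ∈ S, σ x := sum_nonneg fun x hx => h0 x (mem_insert_of_mem hx)
    rw [sum_insert hs] at hv ⊢
    rw [abs_lt] at hv
    rcases le_total 0 v with h | h
    · obtain ⟨U, hU, hUv⟩ := ih' (v - σ s) (by rw [abs_lt]; constructor <;> linarith)
      refine ⟨U, hU.trans (subset_insert s S), ?_⟩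
      rw [abs_lt] at hUv ⊢
      constructor <;> linarith
    · obtain ⟨U, hU, hUv⟩ := ih' (v + σ s) (by rw [abs_lt]; constructor <;> linarith)
      refine ⟨insert s U, insert_subset_insert s hU, ?_⟩
      rw [sum_insert fun h => hs (hU h)]
      rw [abs_lt] at hUv ⊢
      constructor <;> linarith

/-- If all signed sums of numbers in `[θ, 2θ)` are at least `θ` in absolute value, then the sign
of a signed sum only depends on the number of positive terms. -/
theorem signed_sum_pos_of_card_eq {V : Type} [DecidableEq V] (σ : V → ℝ) (θ : ℝ) (S : Finset V)
    (hge : ∀ x ∈ S, θ ≤ σ x) (hlt : ∀ x ∈ S, σ x < 2 * θ)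
    (hsum : ∀ U ⊆ S, θ ≤ |2 * ∑ x ∈ U, σ x - ∑ x ∈ S, σ x|)
    (W : Finset V) (hW : W ⊆ S) (n : ℕ) (U : Finset V) (hU : U ⊆ S) (hn : (U \ W).card = n)
    (hcard : U.card = W.card) (hpos : 0 < 2 * ∑ x ∈ U, σ x - ∑ x ∈ S, σ x) :
    0 < 2 * ∑ x ∈ W, σ x - ∑ x ∈ S, σ x := by
  induction n generalizing U with
  | zero =>
    have hUW : U = W := eq_of_subset_of_card_le
      (sdiff_eq_empty_iff_subset.1 (card_eq_zero.1 hn)) hcard.ge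
    rwa [← hUW]
  | succ n ih =>
    obtain ⟨u, hu⟩ : (U \ W).Nonempty := card_pos.1 (by omega)
    obtain ⟨v, hv⟩ : (W \ U).Nonempty := card_pos.1 (by
      rw [← card_sdiff_comm hcard]; omega)
    rw [mem_sdiff] at hu hv
    have hvne : v ∉ U.erase u := fun h => hv.2 (mem_of_mem_erase h)
    have hsub : insert v (U.erase u) ⊆ S :=
      insert_subset (hW hv.1) ((erase_subset u U).trans hU)
    have hsum' : ∑ x ∈ insert v (U.erase u), σ x = ∑ x ∈ U, σ x - σ u + σ v := by
      rw [sum_insert hvne, ← add_sum_erase U σ hu.1]; ring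
    refine ih (insert v (U.erase u)) hsub ?_ ?_ ?_
    · have : insert v (U.erase u) \ W = (U \ W).erase u := by
        ext x
        simp only [mem_sdiff, mem_insert, mem_erase]
        constructor
        · rintro ⟨rfl | h, h'⟩
          · exact absurd hv.1 h'
          · exact ⟨h.1, h.2, h'⟩
        · rintro ⟨h, h', h''⟩
          exact ⟨Or.inr ⟨h, h'⟩, h''⟩
      rw [this, card_erase_of_mem (mem_sdiff.2 hu), hn]; rfl
    · rw [card_insert_of_notMem hvne, card_erase_of_mem hu.1, ← hcard]
      have : 0 < U.card := card_pos.2 ⟨u, hu.1⟩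
      omega
    · have h1 := hsum U hU
      have h2 := hsum _ hsub
      rw [abs_of_pos hpos] at h1
      rw [hsum'] at h2 ⊢
      have h3 := hge v (hW hv.1)
      have h4 := hlt u (hU hu.1)
      rcases le_abs.1 h2 with h | h <;> linarith

/-- If all signed sums of the numbers `σ x ∈ [θ, 2θ)` have absolute value at least `t ≥ θ > 0`,
then their number is odd and every signed sum with one more plus than minus is at least `t`. -/
theorem odd_card_and_le_signed_sum {V : Type} [DecidableEq V] (σ : V → ℝ) (θ t : ℝ) (hθ : 0 < θ)
    (hθt : θ ≤ t) (S : Finset V) (hge : ∀ x ∈ S, θ ≤ σ x) (hlt : ∀ x ∈ S, σ x < 2 * θ)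
    (hsum : ∀ U ⊆ S, t ≤ |2 * ∑ x ∈ U, σ x - ∑ x ∈ S, σ x|) :
    ∃ j, S.card = 2 * j + 1 ∧
      ∀ U ⊆ S, U.card = j + 1 → t ≤ 2 * ∑ x ∈ U, σ x - ∑ x ∈ S, σ x := by
  have hmaj : ∀ U ⊆ S, S.card ≤ 2 * U.card → 0 < 2 * ∑ x ∈ U, σ x - ∑ x ∈ S, σ x := by
    intro U hU hc
    by_contra hneg
    have h1 := hsum U hU
    rw [abs_of_nonpos (not_lt.1 hneg)] at h1
    have hcs : (S \ U).card = S.card - U.card := card_sdiff_of_subset hU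
    have hle := card_le_card hU
    obtain ⟨W, hW1, hW2, hW3⟩ := exists_subsuperset_card_eq (sdiff_subset : S \ U ⊆ S)
      (n := U.card) (by omega) hle
    refine hneg (signed_sum_pos_of_card_eq σ θ S hge hlt (fun U hU => hθt.trans (hsum U hU)) U hU
      _ W hW2 rfl hW3 ?_)
    have h3 : ∑ x ∈ S \ U, σ x ≤ ∑ x ∈ W, σ x :=
      sum_le_sum_of_subset_of_nonneg hW1 fun x hx _ => hθ.le.trans (hge x (hW2 hx))
    have h4 := sum_sdiff hU (f := σ)
    linarith
  rcases Nat.even_or_odd' S.card with ⟨j, hj | hj⟩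
  · exfalso
    obtain ⟨U, hU, hUc⟩ := exists_subset_card_eq (s := S) (n := j) (by omega)
    have h1 := hmaj U hU (by omega)
    have h2 := hmaj (S \ U) sdiff_subset (by rw [card_sdiff_of_subset hU]; omega)
    have h4 := sum_sdiff hU (f := σ)
    linarith
  · refine ⟨j, hj, fun U hU hUc => ?_⟩
    have := hsum U hU
    rwa [abs_of_pos (hmaj U hU (by omega))] at this

/-- The numerical inequality behind the choice of the bias `q`. -/
theorem bias_bound (d k T m M γ g g' θ τ q n y : ℝ) (hd : 4 ≤ d)
    (hk : k = d ∧ n ≤ (d + 1) / 2 ∨ d + 1 ≤ k)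
    (hθ : 0 < θ) (hm : m < (2 * d - 1) * θ) (hm0 : 0 ≤ m) (hθτ : θ ≤ τ)
    (hT : k * τ ≤ T) (hM : 0 ≤ M) (hγ : 0 ≤ γ) (hsum : T + 2 * γ + M ≤ m)
    (hg0 : 0 < g) (hg : g ≤ 2 * τ - θ) (hg0' : 0 < g') (hg' : g' ≤ 2 * τ - θ)
    (hy : d * y + γ ≤ m) (hyτ : τ ≤ y) (hny : γ ≤ n * (y - τ)) (hq : q = g / (2 * T)) :
    q * g' + 2 * q * γ + 2 * q ^ 2 * M ≤ m / (2 * (2 * d - 1)) := by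
  have hτ : 0 < τ := hθ.trans_le hθτ
  have hkd : d ≤ k := by
    rcases hk with ⟨h, -⟩ | h <;> linarith
  have hdT : d * τ ≤ T := le_trans (by gcongr) hT
  have hT0 : 0 < T := lt_of_lt_of_le (by positivity) hdT
  have hD : 0 < 2 * d - 1 := by linarith
  have hgT : 2 * g ≤ T := by nlinarith
  obtain ⟨θ₀, hθ₀⟩ : ∃ θ₀, m = (2 * d - 1) * θ₀ := ⟨m / (2 * d - 1), by field_simp⟩
  have hθ₀θ : θ₀ < θ := by rw [hθ₀] at hm; exact lt_of_mul_lt_mul_left hm hD.le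
  have hθ₀0 : 0 ≤ θ₀ := by rw [hθ₀] at hm0; exact nonneg_of_mul_nonneg_right hm0 hD
  obtain ⟨e, he⟩ : ∃ e, e = τ - θ₀ := ⟨_, rfl⟩
  have he0 : 0 ≤ e := by linarith
  have key : g * (g' + 2 * γ + M / 2) ≤ T * θ₀ := by
    have h1 : g * (g' + 2 * γ + M / 2) ≤ (τ + e) * ((τ + e) + 2 * γ + M / 2) := by
      gcongr <;> linarith
    refine h1.trans ?_
    have hθe : θ₀ = τ - e := by linarith
    rcases hk with ⟨hk, hn⟩ | hk
    · have h13 : 13 * γ ≤ 5 * (m - d * τ) := by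
        have h2 : γ ≤ (d + 1) / 2 * (y - τ) := hny.trans (by gcongr)
        nlinarith
      have h2 : 2 * γ + M / 2 ≤ 5 / 13 * (m - d * τ) + (m - T) / 2 := by linarith
      have h3 : (τ + e) * ((τ + e) + 2 * γ + M / 2) ≤
          (τ + e) * ((τ + e) + (5 / 13 * (m - d * τ) + (m - T) / 2)) := by
        gcongr ?_ * ?_; linarith
      refine h3.trans ?_
      have h4 : 0 ≤ (T - d * τ) * (θ₀ + (τ + e) / 2) :=
        mul_nonneg (by linarith) (by linarith)
      rw [hθ₀, hθe]
      rw [hθe] at h4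
      have h5 : 0 ≤ (d - 4) * (3 / 26 * τ ^ 2 - 3 / 26 * τ * e + 23 / 13 * e ^ 2) := by
        apply mul_nonneg (by linarith)
        nlinarith [sq_nonneg (τ - e), sq_nonneg e, sq_nonneg τ]
      nlinarith [sq_nonneg (τ - 3.5 * e), sq_nonneg e, sq_nonneg τ]
    · have h2 : 2 * γ + M / 2 ≤ m - T := by linarith
      have h3 : (τ + e) * ((τ + e) + 2 * γ + M / 2) ≤ (τ + e) * ((τ + e) + (m - T)) := by
        gcongr ?_ * ?_; linarith
      refine h3.trans ?_
      have h4 : (d + 1) * τ * τ ≤ T * τ := by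
        gcongr; exact le_trans (by gcongr) hT
      rw [hθ₀, hθe]
      nlinarith [sq_nonneg (τ - e), mul_nonneg (by linarith : 0 ≤ d - 4) (sq_nonneg e)]
  have hqg : q * (2 * T) = g := by rw [hq]; field_simp
  have hq0 : 0 ≤ q := by rw [hq]; positivity
  have hq4 : 4 * q ≤ 1 := by
    rw [hq, ← mul_div_assoc, div_le_one (by positivity)]; linarith
  have h1 : q * (g' + 2 * γ + M / 2) ≤ θ₀ / 2 := by
    have : T * (2 * (q * (g' + 2 * γ + M / 2))) ≤ T * θ₀ := by
      rw [← hqg] at key; linarith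
    linarith [le_of_mul_le_mul_left this hT0]
  have h2 : m / (2 * (2 * d - 1)) = θ₀ / 2 := by rw [hθ₀]; field_simp
  rw [h2]
  have h3 : q * (4 * q) * M ≤ q * 1 * M := by gcongr
  linarith

theorem target_mul_eq (d m : ℝ) (hd : 2 * d - 1 ≠ 0) :
    (d - 1) / (2 * (2 * d - 1)) * m = m / 4 - m / (2 * (2 * d - 1)) / 2 := by
  obtain ⟨D, hD⟩ : ∃ D, D = 2 * d - 1 := ⟨_, rfl⟩
  rw [← hD] at hd ⊢
  rw [show d - 1 = (D - 1) / 2 by rw [hD]; ring]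
  field_simp; ring

/-- The fractional partition when the vertices with `a ≤ b` form a majority among the vertices of
large imbalance. Here `a` and `b` stand for the out- and indegrees of the vertices of `X`. -/
theorem exists_biased_partition_of_majority {V : Type} [DecidableEq V] (X X' : Finset V)
    (a b : V → ℝ) (M y m θ : ℝ) (d : ℕ) (hd : 4 ≤ d) (ha : ∀ x, 0 ≤ a x) (hb : ∀ x, 0 ≤ b x)
    (hay : ∀ x ∈ X, a x ≤ y) (hby : ∀ x ∈ X, b x ≤ y) (hM : 0 ≤ M)
    (hm : m = ∑ x ∈ X, a x + ∑ x ∈ X, b x + M)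
    (hdy : d * y + ∑ x ∈ X, min (a x) (b x) ≤ m) (hθ : 0 < θ) (hmθ : m < (2 * d - 1) * θ)
    (hX' : X' = X.filter fun x => θ ≤ |a x - b x|) (j : ℕ) (hj : X'.card = 2 * j + 1)
    (hodd : ∀ U ⊆ X', U.card = j + 1 → θ + ∑ x ∈ X \ X', |a x - b x| ≤
      2 * ∑ x ∈ U, |a x - b x| - ∑ x ∈ X', |a x - b x|)
    (hcard : d ≤ X'.card) (hmaj : j + 1 ≤ (X'.filter fun x => a x ≤ b x).card) :
    ∃ X₂ ⊆ X, ∃ p : ℝ, 0 ≤ p ∧ p ≤ 1 ∧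
      ((d : ℝ) - 1) / (2 * (2 * d - 1)) * m ≤ (1 - p) * ∑ x ∈ X \ X₂, a x + p * ∑ x ∈ X₂, b x
        + p * (1 - p) * M ∧
      ((d : ℝ) - 1) / (2 * (2 * d - 1)) * m ≤ p * ∑ x ∈ X₂, a x + (1 - p) * ∑ x ∈ X \ X₂, b x
        + p * (1 - p) * M := by
  obtain ⟨σ, hσ⟩ : ∃ σ : V → ℝ, ∀ x, |a x - b x| = σ x := ⟨_, fun _ => rfl⟩
  simp only [hσ] at hodd hX'
  have hd' : (4 : ℝ) ≤ d := by exact_mod_cast hd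
  have hσ0 : ∀ x, 0 ≤ σ x := fun x => hσ x ▸ abs_nonneg _
  have hXX : X' ⊆ X := hX' ▸ filter_subset _ _
  have hσθ : ∀ x ∈ X', θ ≤ σ x := fun x hx => by rw [hX'] at hx; exact (mem_filter.1 hx).2
  set N := X'.filter fun x => a x ≤ b x with hN
  have hNX : N ⊆ X' := filter_subset _ _
  have hσN : ∀ x ∈ N, σ x = b x - a x := fun x hx => by
    rw [← hσ, abs_sub_comm, abs_of_nonneg (sub_nonneg.2 (mem_filter.1 hx).2)]
  have hσP : ∀ x ∈ X' \ N, σ x = a x - b x := fun x hx => by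
    rw [mem_sdiff, hN, mem_filter] at hx
    rw [← hσ, abs_of_nonneg]
    have : ¬ a x ≤ b x := fun h => hx.2 ⟨hx.1, h⟩
    linarith
  obtain ⟨x₀, hx₀, hmin⟩ := exists_min_image X' σ (card_pos.1 (by omega))
  obtain ⟨L, hL, hLj⟩ := exists_subset_card_eq (s := N.erase x₀) (n := j)
    (by have := pred_card_le_card_erase (s := N) (a := x₀); omega)
  have hLN : L ⊆ N := hL.trans (erase_subset _ _)
  have hx₀L : x₀ ∉ L := fun h => notMem_erase x₀ N (hL h)
  have hLX : L ⊆ X' := hLN.trans hNX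
  have hUc : (X' \ L).card = j + 1 := by rw [card_sdiff_of_subset hLX]; omega
  have hWc : (insert x₀ L).card = j + 1 := by rw [card_insert_of_notMem hx₀L, hLj]
  have hU := hodd (X' \ L) sdiff_subset hUc
  have hW := hodd (insert x₀ L) (insert_subset hx₀ hLX) hWc
  rw [sum_insert hx₀L] at hW
  have hX2X' : N \ L ⊆ X' := sdiff_subset.trans hNX
  have hX2 : N \ L ⊆ X := hX2X'.trans hXX
  obtain ⟨T, hT⟩ : ∃ T, T = ∑ x ∈ X', σ x := ⟨_, rfl⟩
  obtain ⟨w, hw⟩ : ∃ w, w = ∑ x ∈ X \ X', σ x := ⟨_, rfl⟩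
  have hw0 : 0 ≤ w := hw ▸ sum_nonneg fun x _ => hσ0 x
  rw [← hT, ← hw] at hU hW
  have hUL : ∑ x ∈ X' \ L, σ x + ∑ x ∈ L, σ x = T := hT ▸ sum_sdiff hLX
  obtain ⟨l, hl⟩ : ∃ l, l = ∑ x ∈ L, σ x := ⟨_, rfl⟩
  rw [← hl] at hUL hW
  have hsd : ∀ f : V → ℝ, ∑ x ∈ X, f x = ∑ x ∈ X \ X', f x + ∑ x ∈ X' \ N, f x
      + ∑ x ∈ N \ L, f x + ∑ x ∈ L, f x := fun f => by
    rw [add_assoc, sum_sdiff hLN, add_assoc, sum_sdiff hNX, sum_sdiff hXX]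
  have hsd1 : ∀ f : V → ℝ, ∑ x ∈ X \ (N \ L), f x = ∑ x ∈ X \ X', f x + ∑ x ∈ X' \ N, f x
      + ∑ x ∈ L, f x := fun f => by
    have := sum_sdiff hX2 (f := f)
    linarith [hsd f]
  have hT3 : T = ∑ x ∈ X' \ N, σ x + ∑ x ∈ N \ L, σ x + l := by
    rw [hT, hl, add_assoc, sum_sdiff hLN, sum_sdiff hNX]
  have hlN : l = ∑ x ∈ L, b x - ∑ x ∈ L, a x := by
    rw [hl, ← sum_sub_distrib]; exact sum_congr rfl fun x hx => hσN x (hLN hx)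
  have hN2 : ∑ x ∈ N \ L, σ x = ∑ x ∈ N \ L, b x - ∑ x ∈ N \ L, a x := by
    rw [← sum_sub_distrib]; exact sum_congr rfl fun x hx => hσN x (sdiff_subset hx)
  have hP : ∑ x ∈ X' \ N, σ x = ∑ x ∈ X' \ N, a x - ∑ x ∈ X' \ N, b x := by
    rw [← sum_sub_distrib]; exact sum_congr rfl hσP
  have hS1 : ∑ x ∈ X \ X', a x - ∑ x ∈ X \ X', b x ≤ w := by
    rw [hw, ← sum_sub_distrib]; exact sum_le_sum fun x _ => hσ x ▸ le_abs_self _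
  have hS2 : ∑ x ∈ X \ X', b x - ∑ x ∈ X \ X', a x ≤ w := by
    rw [hw, ← sum_sub_distrib]
    exact sum_le_sum fun x _ => by rw [← hσ x, abs_sub_comm]; exact le_abs_self _
  have nn : ∀ (f : V → ℝ), (∀ x, 0 ≤ f x) → ∀ s : Finset V, 0 ≤ ∑ x ∈ s, f x :=
    fun f hf s => sum_nonneg fun x _ => hf x
  have haS := nn a ha (X \ X')
  have hbS := nn b hb (X \ X')
  have haP := nn a ha (X' \ N)
  have hbP := nn b hb (X' \ N)
  have haR := nn a ha (N \ L)
  have hbR := nn b hb (N \ L)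
  have haL := nn a ha L
  have hbL := nn b hb L
  have hσP0 := nn σ hσ0 (X' \ N)
  have hkT : (X'.card : ℝ) * σ x₀ ≤ T := by
    rw [hT, ← nsmul_eq_mul]; exact card_nsmul_le_sum _ _ _ hmin
  have hy0 : σ x₀ ≤ y := by
    rw [← hσ, abs_le]
    have h1 := hay x₀ (hXX hx₀)
    have h2 := hby x₀ (hXX hx₀)
    constructor <;> linarith [ha x₀, hb x₀]
  have hγmin : ∑ x ∈ N \ L, a x ≤ ∑ x ∈ X, min (a x) (b x) := by
    refine le_trans (sum_le_sum fun x hx => ?_)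
      (sum_le_sum_of_subset_of_nonneg hX2 fun x _ _ => le_min (ha x) (hb x))
    exact le_min le_rfl (mem_filter.1 (sdiff_subset hx)).2
  have hRc : ((N \ L).card : ℝ) ≤ j + 1 := by
    have := card_le_card (sdiff_subset_sdiff hNX (Subset.refl L))
    rw [hUc] at this
    exact_mod_cast this
  have hny : ∑ x ∈ N \ L, a x ≤ ((j : ℝ) + 1) * (y - σ x₀) := by
    refine le_trans ?_ (mul_le_mul_of_nonneg_right hRc (sub_nonneg.2 hy0))
    rw [← nsmul_eq_mul]
    refine sum_le_card_nsmul _ _ _ fun x hx => ?_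
    have h1 := hσN x (sdiff_subset hx)
    have h2 := hmin x (hX2X' hx)
    have h3 := hby x (hX2 hx)
    linarith
  have hk : (X'.card : ℝ) = d ∧ (j : ℝ) + 1 ≤ ((d : ℝ) + 1) / 2 ∨ (d : ℝ) + 1 ≤ X'.card := by
    rcases hcard.eq_or_lt with h | h
    · left
      have h1 : (d : ℝ) = 2 * j + 1 := by rw [h, hj]; push_cast; ring
      exact ⟨by rw [← h], by linarith⟩
    · right; exact_mod_cast h
  rw [hsd a, hsd b] at hm
  obtain ⟨g, hg⟩ : ∃ g, g = (∑ x ∈ X \ (N \ L), a x + ∑ x ∈ N \ L, b x)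
      - (∑ x ∈ N \ L, a x + ∑ x ∈ X \ (N \ L), b x) := ⟨_, rfl⟩
  have hg1 := hg
  rw [hsd1, hsd1] at hg1
  have hT0 : 0 < T := lt_of_lt_of_le
    (mul_pos (by rw [hj]; positivity) (hθ.trans_le (hσθ x₀ hx₀))) hkT
  obtain ⟨q, hq⟩ : ∃ q, q = g / (2 * T) := ⟨_, rfl⟩
  have hbound := bias_bound d X'.card T m M (∑ x ∈ N \ L, a x) g (T - 2 * l) θ (σ x₀) q (j + 1) y
    hd' hk hθ hmθ (by linarith) (hσθ x₀ hx₀) hkT hM haR (by linarith) (by linarith) (by linarith)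
    (by linarith) (by linarith) (by linarith) hy0 hny hq
  have hq0 : 0 ≤ q := by rw [hq]; exact div_nonneg (by linarith) (by linarith)
  have hq2 : q ≤ 1 / 2 := by
    rw [hq, div_le_iff₀ (by positivity)]
    have : 4 * σ x₀ ≤ X'.card * σ x₀ := by
      have : (4 : ℝ) ≤ X'.card := by exact_mod_cast hd.trans hcard
      exact mul_le_mul_of_nonneg_right this (hσ0 x₀)
    linarith [hσ0 x₀]
  have hqT : q * T = g / 2 := by rw [hq]; field_simp
  have hD0 : 2 * (d : ℝ) - 1 ≠ 0 := by linarith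
  refine ⟨N \ L, hX2, 1 / 2 - q, by linarith, by linarith, ?_, ?_⟩
  · rw [target_mul_eq d m hD0, hsd1 a]
    have h1 : q * (∑ x ∈ N \ L, b x) ≤ q * ((T + (T - 2 * l)) / 2 + ∑ x ∈ N \ L, a x) :=
      mul_le_mul_of_nonneg_left (by linarith) hq0
    have h2 : 0 ≤ q * (∑ x ∈ X \ X', a x + ∑ x ∈ X' \ N, a x + ∑ x ∈ L, a x) :=
      mul_nonneg hq0 (by linarith)
    linarith
  · rw [target_mul_eq d m hD0, hsd1 b]
    have h1 : q * ((T - (T - 2 * l)) / 2) ≤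
        q * (∑ x ∈ X \ X', b x + ∑ x ∈ X' \ N, b x + ∑ x ∈ L, b x) :=
      mul_le_mul_of_nonneg_left (by linarith) hq0
    linarith

/-- The fractional partition when all gaps exceed `m / (2d - 1)`. -/
theorem exists_biased_partition {V : Type} [DecidableEq V] (X : Finset V)
    (a b : V → ℝ) (M y m θ : ℝ) (d : ℕ) (hd : 4 ≤ d) (ha : ∀ x, 0 ≤ a x) (hb : ∀ x, 0 ≤ b x)
    (hay : ∀ x ∈ X, a x ≤ y) (hby : ∀ x ∈ X, b x ≤ y) (hM : 0 ≤ M)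
    (hm : m = ∑ x ∈ X, a x + ∑ x ∈ X, b x + M)
    (hdy : d * y + ∑ x ∈ X, min (a x) (b x) ≤ m) (hθ : 0 < θ) (hmθ : m < (2 * d - 1) * θ)
    (hgap : ∀ U ⊆ X, θ ≤ |∑ x ∈ U, (a x - b x) - ∑ x ∈ X \ U, (a x - b x)|)
    (hcard : d ≤ (X.filter fun x => θ ≤ |a x - b x|).card) :
    ∃ X₂ ⊆ X, ∃ p : ℝ, 0 ≤ p ∧ p ≤ 1 ∧
      ((d : ℝ) - 1) / (2 * (2 * d - 1)) * m ≤ (1 - p) * ∑ x ∈ X \ X₂, a x + p * ∑ x ∈ X₂, b x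
        + p * (1 - p) * M ∧
      ((d : ℝ) - 1) / (2 * (2 * d - 1)) * m ≤ p * ∑ x ∈ X₂, a x + (1 - p) * ∑ x ∈ X \ X₂, b x
        + p * (1 - p) * M := by
  obtain ⟨X', hX'⟩ : ∃ X', X' = X.filter fun x => θ ≤ |a x - b x| := ⟨_, rfl⟩
  rw [← hX'] at hcard
  have hXX : X' ⊆ X := hX' ▸ filter_subset _ _
  have hd' : (4 : ℝ) ≤ d := by exact_mod_cast hd
  have hsigned : ∀ U ⊆ X, θ ≤ |2 * ∑ x ∈ U, |a x - b x| - (∑ x ∈ X, |a x - b x|)| := by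
    intro U hU
    refine (hgap (X.filter fun x => (x ∈ U ↔ b x ≤ a x)) (filter_subset _ _)).trans_eq ?_
    congr 1
    rw [← filter_not, sum_filter, sum_filter, ← sum_sub_distrib, mul_sum,
      ← inter_eq_right.2 hU, ← filter_mem_eq_inter, sum_filter, ← sum_sub_distrib]
    refine sum_congr rfl fun x hx => ?_
    by_cases h1 : x ∈ U <;> by_cases h2 : b x ≤ a x
    · simp [hx, h1, h2, abs_of_nonneg (sub_nonneg.2 h2)]; ring
    · simp [hx, h1, h2, abs_of_neg (sub_neg.2 (not_le.1 h2))]; ring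
    · simp [hx, h1, h2, abs_of_nonneg (sub_nonneg.2 h2)]
    · simp [hx, h1, h2, abs_of_neg (sub_neg.2 (not_le.1 h2))]
  have hlarge : ∀ U ⊆ X', θ + ∑ x ∈ X \ X', |a x - b x| ≤
      |2 * ∑ x ∈ U, |a x - b x| - (∑ x ∈ X', |a x - b x|)| := by
    intro U hU
    by_contra hlt
    obtain ⟨W, hW, hWlt⟩ := exists_signed_sum_abs_lt (fun x => |a x - b x|) θ (X \ X')
      (fun x _ => abs_nonneg _) (fun x hx => by
        by_contra h
        rw [mem_sdiff, hX', mem_filter] at hx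
        exact hx.2 ⟨hx.1, not_lt.1 h⟩) _ (not_le.1 hlt)
    have hdisj : Disjoint U W :=
      disjoint_of_subset_left hU (disjoint_of_subset_right hW disjoint_sdiff)
    refine absurd (hsigned (U ∪ W) (union_subset (hU.trans hXX) (hW.trans sdiff_subset)))
      (not_le.2 (lt_of_eq_of_lt ?_ hWlt))
    congr 1
    rw [sum_union hdisj, ← sum_sdiff hXX]
    ring
  have hS : ∑ x ∈ X, min (a x) (b x) ≥ 0 := sum_nonneg fun x _ => le_min (ha x) (hb x)
  have hlt : ∀ x ∈ X', |a x - b x| < 2 * θ := by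
    intro x hx
    have h1 : |a x - b x| ≤ y := by
      have h1 := hay x (hXX hx)
      have h2 := hby x (hXX hx)
      rw [abs_le]
      constructor <;> linarith [ha x, hb x]
    have h2 : (d : ℝ) * y < d * (2 * θ) := by linarith
    exact h1.trans_lt (lt_of_mul_lt_mul_left h2 (by linarith))
  obtain ⟨j, hj, hodd⟩ := odd_card_and_le_signed_sum (fun x => |a x - b x|) θ
    (θ + ∑ x ∈ X \ X', |a x - b x|) hθ
    (le_add_of_nonneg_right (sum_nonneg fun x _ => abs_nonneg _)) X'
    (fun x hx => by rw [hX'] at hx; exact (mem_filter.1 hx).2) hlt hlarge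
  by_cases hmaj : j + 1 ≤ (X'.filter fun x => a x ≤ b x).card
  · exact exists_biased_partition_of_majority X X' a b M y m θ d hd ha hb hay hby hM hm hdy hθ hmθ
      hX' j hj hodd hcard hmaj
  · have hmaj' : j + 1 ≤ (X'.filter fun x => b x ≤ a x).card := by
      have h1 := card_filter_add_card_filter_not (s := X') (fun x => a x ≤ b x)
      have h2 : (X'.filter fun x => ¬ a x ≤ b x).card ≤ (X'.filter fun x => b x ≤ a x).card :=
        card_le_card (monotone_filter_right _ fun x _ h => (not_le.1 h).le)
      omega
    obtain ⟨X₂, hX₂, p, hp0, hp1, h1, h2⟩ := exists_biased_partition_of_majority X X' b a M y m θ d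
      hd hb ha hby hay hM (by rw [hm]; ring) (by simpa only [min_comm] using hdy) hθ hmθ
      (by simpa only [abs_sub_comm] using hX') j hj
      (by simpa only [abs_sub_comm] using hodd) hcard hmaj'
    exact ⟨X₂, hX₂, p, hp0, hp1, h2.trans_eq (by ring), h1.trans_eq (by ring)⟩

/-- Independent rounding of the coordinates in `W`, derandomized: two functions that are affine in
every coordinate, with slopes at most `D`, stay close to `c₁` and `c₂` in mean square. -/
theorem exists_rounding_s12 {V : Type} [DecidableEq V] (F₁ F₂ : (V → ℝ) → ℝ) (D : V → ℝ)
    (h₁ : ∀ z : V → ℝ, (∀ v, 0 ≤ z v ∧ z v ≤ 1) → ∀ y, ∃ α β, |α| ≤ D y ∧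
      ∀ t, F₁ (Function.update z y t) = α * t + β)
    (h₂ : ∀ z : V → ℝ, (∀ v, 0 ≤ z v ∧ z v ≤ 1) → ∀ y, ∃ α β, |α| ≤ D y ∧
      ∀ t, F₂ (Function.update z y t) = α * t + β)
    (c₁ c₂ : ℝ) (W : Finset V) (z : V → ℝ) (hz : ∀ v, 0 ≤ z v ∧ z v ≤ 1) :
    ∃ z' : V → ℝ, (∀ v ∈ W, z' v = 0 ∨ z' v = 1) ∧ (∀ v ∉ W, z' v = z v) ∧
      (F₁ z' - c₁) ^ 2 + (F₂ z' - c₂) ^ 2 ≤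
        (F₁ z - c₁) ^ 2 + (F₂ z - c₂) ^ 2 + ∑ v ∈ W, D v ^ 2 / 2 := by
  induction W using Finset.induction_on generalizing z with
  | empty => exact ⟨z, by simp, by simp, by simp⟩
  | insert y W hy ih =>
    obtain ⟨α₁, β₁, hα₁, hF₁⟩ := h₁ z hz y
    obtain ⟨α₂, β₂, hα₂, hF₂⟩ := h₂ z hz y
    have hstep : ∃ t : ℝ, (t = 0 ∨ t = 1) ∧
        (F₁ (Function.update z y t) - c₁) ^ 2 + (F₂ (Function.update z y t) - c₂) ^ 2 ≤
          (F₁ z - c₁) ^ 2 + (F₂ z - c₂) ^ 2 + D y ^ 2 / 2 := by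
      have e₁ := hF₁ (z y)
      have e₂ := hF₂ (z y)
      rw [Function.update_eq_self] at e₁ e₂
      by_contra hcon
      push Not at hcon
      have k0 := hcon 0 (Or.inl rfl)
      have k1 := hcon 1 (Or.inr rfl)
      rw [hF₁, hF₂, e₁, e₂] at k0 k1
      obtain ⟨p0, p1⟩ := hz y
      generalize z y = p at *
      have s₁ : α₁ ^ 2 ≤ D y ^ 2 := sq_le_sq' (by linarith [neg_abs_le α₁]) (by
        linarith [le_abs_self α₁])
      have s₂ : α₂ ^ 2 ≤ D y ^ 2 := sq_le_sq' (by linarith [neg_abs_le α₂]) (by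
        linarith [le_abs_self α₂])
      have hp : p * (1 - p) ≤ 1 / 4 := by nlinarith [sq_nonneg (p - 1 / 2)]
      have hp0 : 0 ≤ p * (1 - p) := mul_nonneg p0 (by linarith)
      have b₁ : p * (1 - p) * (α₁ ^ 2 + α₂ ^ 2) ≤ 1 / 4 * (D y ^ 2 + D y ^ 2) := by gcongr
      rcases p0.eq_or_lt with hp' | hp'
      · subst hp'
        nlinarith [sq_nonneg (D y)]
      · have q1 := mul_lt_mul_of_pos_left k1 hp'
        have q0 := mul_le_mul_of_nonneg_left k0.le (by linarith : 0 ≤ 1 - p)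
        nlinarith
    obtain ⟨t, ht, hle⟩ := hstep
    obtain ⟨z', hz1, hz2, hz3⟩ := ih (Function.update z y t) (fun v => by
      rcases eq_or_ne v y with rfl | hv
      · rw [Function.update_self]; rcases ht with rfl | rfl <;> norm_num
      · rw [Function.update_of_ne hv]; exact hz v)
    refine ⟨z', fun v hv => ?_, fun v hv => ?_, ?_⟩
    · rcases mem_insert.1 hv with rfl | hv
      · rw [hz2 v hy, Function.update_self]; exact ht
      · exact hz1 v hv
    · rw [mem_insert, not_or] at hv
      rw [hz2 v hv.2, Function.update_of_ne hv.1]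
    · rw [sum_insert hy]; linarith

/-- The weighted number of arcs of `A`, an arc `(u, v)` having weight `f u * g v`. -/
noncomputable def fracArcs {V : Type} [Fintype V] (A : V → V → Prop) [DecidableRel A]
    (f g : V → ℝ) : ℝ :=
  ∑ u, ∑ v, if A u v then f u * g v else 0

theorem fracArcs_update {V : Type} [Fintype V] [DecidableEq V] (A : V → V → Prop)
    [DecidableRel A] (hirr : ∀ v, ¬ A v v) (f g : V → ℝ) (hf : ∀ v, 0 ≤ f v ∧ f v ≤ 1)
    (hg : ∀ v, 0 ≤ g v ∧ g v ≤ 1) (y : V) :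
    ∃ K₁ K₂ K₃ : ℝ, 0 ≤ K₁ ∧ K₁ ≤ outDeg A y ∧ 0 ≤ K₂ ∧ K₂ ≤ inDeg A y ∧ ∀ s t,
      fracArcs A (Function.update f y s) (Function.update g y t) = s * K₁ + t * K₂ + K₃ := by
  refine ⟨∑ v ∈ univ.erase y, if A y v then g v else 0,
    ∑ u ∈ univ.erase y, if A u y then f u else 0,
    ∑ u ∈ univ.erase y, ∑ v ∈ univ.erase y, if A u v then f u * g v else 0, ?_, ?_, ?_, ?_, ?_⟩
  · exact sum_nonneg fun v _ => by split_ifs; exacts [(hg v).1, le_rfl]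
  · rw [outDeg, card_filter, Nat.cast_sum]
    refine (sum_le_sum fun v _ => ?_).trans
      (sum_le_sum_of_subset_of_nonneg (erase_subset y univ) fun v _ _ => Nat.cast_nonneg _)
    split_ifs <;> simp [(hg v).2]
  · exact sum_nonneg fun v _ => by split_ifs; exacts [(hf v).1, le_rfl]
  · rw [inDeg, card_filter, Nat.cast_sum]
    refine (sum_le_sum fun v _ => ?_).trans
      (sum_le_sum_of_subset_of_nonneg (erase_subset y univ) fun v _ _ => Nat.cast_nonneg _)
    split_ifs <;> simp [(hf v).2]
  · intro s t
    rw [fracArcs, ← add_sum_erase univ _ (mem_univ y), ← add_sum_erase univ _ (mem_univ y),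
      if_neg (hirr y), zero_add, mul_sum, mul_sum, add_assoc]
    simp only [← sum_add_distrib]
    refine sum_congr rfl fun u hu => ?_
    have hu' := ne_of_mem_erase hu
    rw [← add_sum_erase univ _ (mem_univ y), Function.update_self, Function.update_self,
      Function.update_of_ne hu', Function.update_of_ne hu', mul_ite, mul_zero, mul_ite, mul_zero,
      mul_comm t]
    congr 2
    refine sum_congr rfl fun v hv => ?_
    rw [Function.update_of_ne (ne_of_mem_erase hv)]

theorem dArcs_eq_sum {V : Type} [Fintype V] [DecidableEq V] (A : V → V → Prop) [DecidableRel A]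
    (S T : Finset V) : (dArcs A S T : ℝ) = ∑ u ∈ S, ∑ v ∈ T, if A u v then 1 else 0 := by
  rw [dArcs, card_filter, sum_product]
  push_cast
  rfl

theorem dArcs_eq_fracArcs {V : Type} [Fintype V] [DecidableEq V] (A : V → V → Prop)
    [DecidableRel A] (S T : Finset V) : (dArcs A S T : ℝ) =
      fracArcs A (fun u => if u ∈ S then 1 else 0) (fun v => if v ∈ T then 1 else 0) := by
  rw [dArcs_eq_sum, fracArcs, ← sum_subset (subset_univ S) fun u _ hu => by simp [hu]]
  refine sum_congr rfl fun u hu => ?_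
  rw [← sum_subset (subset_univ T) fun v _ hv => by simp [hv]]
  exact sum_congr rfl fun v hv => by simp [hu, hv]

/-- Rounding a fractional partition that is integral outside of `Y`. -/
theorem exists_partition_of_fractional {V : Type} [Fintype V] [DecidableEq V] (A : V → V → Prop)
    [DecidableRel A] (hirr : ∀ v, ¬ A v v) (Y : Finset V) (z : V → ℝ)
    (hz : ∀ v, 0 ≤ z v ∧ z v ≤ 1) (hzY : ∀ v ∉ Y, z v = 0 ∨ z v = 1) :
    ∃ S : Finset V,
      ((dArcs A S Sᶜ : ℝ) - fracArcs A z (fun v => 1 - z v)) ^ 2 +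
        ((dArcs A Sᶜ S : ℝ) - fracArcs A (fun v => 1 - z v) z) ^ 2 ≤
          ∑ v ∈ Y, (deg A v : ℝ) ^ 2 / 2 := by
  have hz' : ∀ z : V → ℝ, (∀ v, 0 ≤ z v ∧ z v ≤ 1) → ∀ v, 0 ≤ 1 - z v ∧ 1 - z v ≤ 1 :=
    fun z hz v => ⟨by linarith [(hz v).2], by linarith [(hz v).1]⟩
  have hupd : ∀ (z : V → ℝ) y t, (fun v => 1 - Function.update z y t v) =
      Function.update (fun v => 1 - z v) y (1 - t) := fun z y t => by
    ext v
    rcases eq_or_ne v y with rfl | hv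
    · simp
    · simp [hv]
  obtain ⟨z', hz1, hz2, hz3⟩ := exists_rounding_s12 (fun z => fracArcs A z (fun v => 1 - z v))
    (fun z => fracArcs A (fun v => 1 - z v) z) (fun v => (deg A v : ℝ))
    (fun z hz y => by
      obtain ⟨K₁, K₂, K₃, h1, h2, h3, h4, h⟩ := fracArcs_update A hirr z _ hz (hz' z hz) y
      refine ⟨K₁ - K₂, K₂ + K₃, ?_, fun t => ?_⟩
      · rw [deg, Nat.cast_add, abs_le]; constructor <;> linarith
      · rw [hupd, h]; ring)
    (fun z hz y => by
      obtain ⟨K₁, K₂, K₃, h1, h2, h3, h4, h⟩ := fracArcs_update A hirr _ z (hz' z hz) hz y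
      refine ⟨K₂ - K₁, K₁ + K₃, ?_, fun t => ?_⟩
      · rw [deg, Nat.cast_add, abs_le]; constructor <;> linarith
      · rw [hupd, h]; ring)
    (fracArcs A z (fun v => 1 - z v)) (fracArcs A (fun v => 1 - z v) z) Y z hz
  have hint : ∀ v, z' v = 0 ∨ z' v = 1 := fun v => by
    by_cases hv : v ∈ Y
    · exact hz1 v hv
    · rw [hz2 v hv]; exact hzY v hv
  refine ⟨univ.filter fun v => z' v = 1, ?_⟩
  have e1 : (fun v => if v ∈ univ.filter fun v => z' v = 1 then (1 : ℝ) else 0) = z' := by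
    ext v
    rcases hint v with h | h <;> simp [h]
  have e2 : (fun v => if v ∈ (univ.filter fun v => z' v = 1)ᶜ then (1 : ℝ) else 0) =
      fun v => 1 - z' v := by
    ext v
    rcases hint v with h | h <;> simp [h]
  rw [dArcs_eq_fracArcs, dArcs_eq_fracArcs, e1, e2]
  simpa using hz3

theorem outDeg_eq_sum {V : Type} [Fintype V] (A : V → V → Prop) [DecidableRel A] (x : V) :
    (outDeg A x : ℝ) = ∑ v, if A x v then 1 else 0 := by
  rw [outDeg, card_filter]; push_cast; rfl

theorem inDeg_eq_sum {V : Type} [Fintype V] (A : V → V → Prop) [DecidableRel A] (x : V) :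
    (inDeg A x : ℝ) = ∑ v, if A v x then 1 else 0 := by
  rw [inDeg, card_filter]; push_cast; rfl

theorem dArcs_eq_sum_outDeg {V : Type} [Fintype V] [DecidableEq V] (A : V → V → Prop)
    [DecidableRel A] (S T : Finset V) (h : ∀ u ∈ S, ∀ v ∉ T, ¬ A u v) :
    (dArcs A S T : ℝ) = ∑ u ∈ S, (outDeg A u : ℝ) := by
  rw [dArcs_eq_sum]
  refine sum_congr rfl fun u hu => ?_
  rw [outDeg_eq_sum]
  exact sum_subset (subset_univ T) fun v _ hv => if_neg (h u hu v hv)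

theorem dArcs_eq_sum_inDeg {V : Type} [Fintype V] [DecidableEq V] (A : V → V → Prop)
    [DecidableRel A] (S T : Finset V) (h : ∀ u ∉ S, ∀ v ∈ T, ¬ A u v) :
    (dArcs A S T : ℝ) = ∑ v ∈ T, (inDeg A v : ℝ) := by
  rw [dArcs_eq_sum, sum_comm]
  refine sum_congr rfl fun v hv => ?_
  rw [inDeg_eq_sum]
  exact sum_subset (subset_univ S) fun u _ hu => if_neg (h u hu v hv)

/-- Rounding the fractional partition that puts `X \ X₂` on the first side, `X₂` on the second one
and every vertex of `Y` on the first side with weight `p`. -/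
theorem exists_partition_of_bias {V : Type} [Fintype V] [DecidableEq V] (A : V → V → Prop)
    [DecidableRel A] (hirr : ∀ v, ¬ A v v) (X Y X₂ : Finset V) (hXY : X ∪ Y = univ)
    (hdXY : Disjoint X Y) (hX₂ : X₂ ⊆ X) (p ε : ℝ) (hp0 : 0 ≤ p) (hp1 : p ≤ 1) (hε : 0 < ε)
    (hdeg : ∀ y ∈ Y, (deg A y : ℝ) ≤ ε ^ 2 * (dArcs A univ univ : ℝ) / 4) :
    ∃ S : Finset V,
      (1 - p) * dArcs A (X \ X₂) Y + p * dArcs A Y X₂ + p * (1 - p) * dArcs A Y Y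
        - ε * dArcs A univ univ ≤ (dArcs A S Sᶜ : ℝ) ∧
      p * dArcs A X₂ Y + (1 - p) * dArcs A Y (X \ X₂) + p * (1 - p) * dArcs A Y Y
        - ε * dArcs A univ univ ≤ (dArcs A Sᶜ S : ℝ) := by
  obtain ⟨m, hm⟩ : ∃ m : ℝ, m = dArcs A univ univ := ⟨_, rfl⟩
  rw [← hm] at hdeg ⊢
  have hm0 : 0 ≤ m := hm ▸ Nat.cast_nonneg _
  obtain ⟨z, hz⟩ : ∃ z : V → ℝ, z = fun v =>
      (if v ∈ X \ X₂ then 1 else 0) + p * (if v ∈ Y then 1 else 0) := ⟨_, rfl⟩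
  have hcase : ∀ v, v ∈ X \ X₂ ∧ v ∉ X₂ ∧ v ∉ Y ∨ v ∉ X \ X₂ ∧ v ∈ X₂ ∧ v ∉ Y ∨
      v ∉ X \ X₂ ∧ v ∉ X₂ ∧ v ∈ Y := by
    intro v
    have h1 : v ∈ X ∪ Y := hXY ▸ mem_univ v
    have h2 : v ∈ X → v ∉ Y := fun h => disjoint_left.1 hdXY h
    have h3 : v ∈ X₂ → v ∈ X := fun h => hX₂ h
    rw [mem_union] at h1
    rw [mem_sdiff]
    tauto
  have hz1 : (fun v => 1 - z v) = fun v =>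
      (if v ∈ X₂ then 1 else 0) + (1 - p) * (if v ∈ Y then 1 else 0) := by
    ext v
    rw [hz]
    dsimp only
    rcases hcase v with ⟨h1, h2, h3⟩ | ⟨h1, h2, h3⟩ | ⟨h1, h2, h3⟩ <;>
      simp only [h1, h2, h3, if_true, if_false] <;> ring
  obtain ⟨S, hS⟩ := exists_partition_of_fractional A hirr Y z
    (fun v => by
      rw [hz]
      dsimp only
      rcases hcase v with ⟨h1, h2, h3⟩ | ⟨h1, h2, h3⟩ | ⟨h1, h2, h3⟩ <;>
        simp only [h1, h3, if_true, if_false] <;> constructor <;> linarith)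
    (fun v hv => by
      rw [hz]
      dsimp only
      rw [if_neg hv]
      split_ifs <;> simp)
  have hF : ∀ (S₁ S₂ : Finset V) (r s : ℝ), fracArcs A
      (fun v => (if v ∈ S₁ then 1 else 0) + r * (if v ∈ Y then 1 else 0))
      (fun v => (if v ∈ S₂ then 1 else 0) + s * (if v ∈ Y then 1 else 0)) =
      dArcs A S₁ S₂ + s * dArcs A S₁ Y + r * dArcs A Y S₂ + r * s * dArcs A Y Y := by
    intro S₁ S₂ r s
    simp only [dArcs_eq_fracArcs, fracArcs, mul_sum, ← sum_add_distrib]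
    refine sum_congr rfl fun u _ => sum_congr rfl fun v _ => ?_
    split_ifs <;> ring
  have hsum : ∑ v ∈ Y, (deg A v : ℝ) ≤ 2 * m := by
    refine (sum_le_sum_of_subset_of_nonneg (subset_univ Y) fun v _ _ => Nat.cast_nonneg _).trans ?_
    have h1 := dArcs_eq_sum_outDeg A univ univ fun _ _ v hv => absurd (mem_univ v) hv
    have h2 := dArcs_eq_sum_inDeg A univ univ fun v hv => absurd (mem_univ v) hv
    simp only [deg, Nat.cast_add, sum_add_distrib]
    linarith
  have hvar : ∑ v ∈ Y, (deg A v : ℝ) ^ 2 / 2 ≤ (ε * m) ^ 2 := by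
    have h1 : ∑ v ∈ Y, (deg A v : ℝ) ^ 2 / 2 ≤ ∑ v ∈ Y, ε ^ 2 * m / 8 * (deg A v : ℝ) :=
      sum_le_sum fun v hv => by
        have := mul_le_mul_of_nonneg_right (hdeg v hv) (Nat.cast_nonneg (α := ℝ) (deg A v))
        linarith
    rw [← mul_sum] at h1
    have h2 := mul_le_mul_of_nonneg_left hsum (by positivity : 0 ≤ ε ^ 2 * m / 8)
    nlinarith [sq_nonneg (ε * m)]
  have hεm : 0 ≤ ε * m := by positivity
  have hb1 := abs_le_of_sq_le_sq' ((le_add_of_nonneg_right (sq_nonneg _)).trans (hS.trans hvar)) hεm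
  have hb2 := abs_le_of_sq_le_sq' ((le_add_of_nonneg_left (sq_nonneg _)).trans (hS.trans hvar)) hεm
  rw [hz1, hz, hF] at hb1 hb2
  have n1 : (0 : ℝ) ≤ dArcs A (X \ X₂) X₂ := Nat.cast_nonneg _
  have n2 : (0 : ℝ) ≤ dArcs A X₂ (X \ X₂) := Nat.cast_nonneg _
  exact ⟨S, by linarith [hb1.1], by linarith [hb2.1]⟩

/-- Proposition 4.1: at least `d` huge vertices. -/
theorem stmt12 {V : Type} [Fintype V] [DecidableEq V] (A : V → V → Prop) [DecidableRel A]
    (hirr : ∀ v, ¬ A v v)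
    (m : ℕ) (hm : m = dArcs A Finset.univ Finset.univ)
    (d : ℕ) (hd : 4 ≤ d) (hout : ∀ x, d ≤ outDeg A x)
    (X Y : Finset V) (hXY : X ∪ Y = Finset.univ) (hdXY : Disjoint X Y)
    (heX : dArcs A X X = 0)
    (θ : ℤ) (hθ : IsLeast {t : ℤ | ∃ X₁ ⊆ X, t = |gap A X₁ (X \ X₁) Y|} θ)
    (X' : Finset V) (hX' : X' = X.filter fun x => θ ≤ sVal A x)
    (ε : ℝ) (hε : 0 < ε) (hdeg : ∀ y ∈ Y, (deg A y : ℝ) ≤ ε ^ 2 * m / 4)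
    (hbig : d ≤ X'.card) :
    ∃ V₁ V₂ : Finset V, V₁ ∪ V₂ = Finset.univ ∧ Disjoint V₁ V₂ ∧
        (((d : ℝ) - 1) / (2 * (2 * (d : ℝ) - 1)) - ε) * m ≤
          min (dArcs A V₁ V₂ : ℝ) (dArcs A V₂ V₁ : ℝ) := by
  have hno : ∀ u ∈ X, ∀ v ∈ X, ¬ A u v := by
    intro u hu v hv huv
    rw [dArcs, card_eq_zero, filter_eq_empty_iff] at heX
    exact heX (mk_mem_product hu hv) huv
  have hYX : ∀ v, v ∉ Y → v ∈ X := fun v hv => by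
    have h : v ∈ X ∪ Y := hXY ▸ mem_univ v
    exact (mem_union.1 h).resolve_right hv
  have hout' : ∀ S ⊆ X, (dArcs A S Y : ℝ) = ∑ x ∈ S, (outDeg A x : ℝ) := fun S hS =>
    dArcs_eq_sum_outDeg A S Y fun u hu v hv => hno u (hS hu) v (hYX v hv)
  have hin' : ∀ S ⊆ X, (dArcs A Y S : ℝ) = ∑ x ∈ S, (inDeg A x : ℝ) := fun S hS =>
    dArcs_eq_sum_inDeg A Y S fun u hu v hv => hno u (hYX u hu) v (hS hv)
  have hmR : (m : ℝ) = dArcs A univ univ := by rw [hm]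
  have hd' : (4 : ℝ) ≤ d := by exact_mod_cast hd
  have hgap : ∀ U ⊆ X, ((gap A U (X \ U) Y : ℤ) : ℝ) =
      ∑ x ∈ U, ((outDeg A x : ℝ) - inDeg A x) - ∑ x ∈ X \ U, ((outDeg A x : ℝ) - inDeg A x) := by
    intro U hU
    rw [gap]
    push_cast
    rw [hout' U hU, hin' U hU, hout' _ sdiff_subset, hin' _ sdiff_subset, sum_sub_distrib,
      sum_sub_distrib]
    ring
  have hmsum : (m : ℝ) = ∑ x ∈ X, (outDeg A x : ℝ) + ∑ x ∈ X, (inDeg A x : ℝ) + dArcs A Y Y := by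
    have hXX : (dArcs A X X : ℝ) = 0 := by rw [heX, Nat.cast_zero]
    rw [← hout' X Subset.rfl, ← hin' X Subset.rfl, hmR, ← hXY]
    simp only [dArcs_eq_sum, sum_union hdXY, sum_add_distrib] at hXX ⊢
    rw [hXX]
    ring
  have hfrac : ∃ X₂ ⊆ X, ∃ p : ℝ, 0 ≤ p ∧ p ≤ 1 ∧
      ((d : ℝ) - 1) / (2 * (2 * d - 1)) * m ≤ (1 - p) * ∑ x ∈ X \ X₂, (outDeg A x : ℝ)
        + p * ∑ x ∈ X₂, (inDeg A x : ℝ) + p * (1 - p) * dArcs A Y Y ∧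
      ((d : ℝ) - 1) / (2 * (2 * d - 1)) * m ≤ p * ∑ x ∈ X₂, (outDeg A x : ℝ)
        + (1 - p) * ∑ x ∈ X \ X₂, (inDeg A x : ℝ) + p * (1 - p) * dArcs A Y Y := by
    rcases le_or_gt ((2 * (d : ℝ) - 1) * θ) m with hsmall | hlarge
    · obtain ⟨X₁, hX₁, hθX₁⟩ := hθ.1
      have hle : |((gap A X₁ (X \ X₁) Y : ℤ) : ℝ)| = θ := by rw [hθX₁, Int.cast_abs]
      rw [hgap X₁ hX₁, sum_sub_distrib, sum_sub_distrib] at hle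
      have hle1 := abs_le.1 hle.le
      have ho := sum_sdiff hX₁ (f := fun x => (outDeg A x : ℝ))
      have hi := sum_sdiff hX₁ (f := fun x => (inDeg A x : ℝ))
      have hθm : (θ : ℝ) / 4 ≤ m / (2 * (2 * d - 1)) / 2 := by
        rw [div_div, div_le_div_iff₀ (by norm_num) (by linarith)]
        linarith
      have hD0 : 2 * (d : ℝ) - 1 ≠ 0 := by linarith
      refine ⟨X \ X₁, sdiff_subset, 1 / 2, by norm_num, by norm_num, ?_, ?_⟩ <;>
        rw [Finset.sdiff_sdiff_eq_self hX₁, target_mul_eq d m hD0] <;> linarith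
    · have hθ0 : (0 : ℝ) < θ := by
        have h1 : 0 < (2 * (d : ℝ) - 1) * θ := lt_of_le_of_lt (Nat.cast_nonneg m) hlarge
        exact pos_of_mul_pos_right h1 (by linarith)
      refine exists_biased_partition X (fun x => (outDeg A x : ℝ)) (fun x => (inDeg A x : ℝ))
        (dArcs A Y Y) Y.card m θ d hd (fun x => Nat.cast_nonneg _) (fun x => Nat.cast_nonneg _)
        (fun x hx => ?_) (fun x hx => ?_) (Nat.cast_nonneg _) hmsum ?_ hθ0 hlarge
        (fun U hU => ?_) ?_
      · refine Nat.cast_le.2 (card_le_card fun v hv => ?_)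
        by_contra h
        exact hno x hx v (hYX v h) (mem_filter.1 hv).2
      · refine Nat.cast_le.2 (card_le_card fun v hv => ?_)
        by_contra h
        exact hno v (hYX v h) x hx (mem_filter.1 hv).2
      · have h1 := dArcs_eq_sum_outDeg A univ univ fun _ _ v hv => absurd (mem_univ v) hv
        rw [hmR, h1, ← hXY, sum_union hdXY, add_comm]
        refine add_le_add (sum_le_sum fun x _ => min_le_left _ _) ?_
        rw [mul_comm, ← nsmul_eq_mul]
        exact card_nsmul_le_sum _ _ _ fun x _ => Nat.cast_le.2 (hout x)
      · rw [← hgap U hU, ← Int.cast_abs]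
        exact Int.cast_le.2 (hθ.2 ⟨U, hU, rfl⟩)
      · refine (hbig.trans_eq (congrArg card hX')).trans (card_le_card ?_)
        refine monotone_filter_right _ fun x _ hx => ?_
        have h1 : sVal A x = |(outDeg A x : ℤ) - inDeg A x| := by
          rw [sVal, abs_eq_max_neg, neg_sub]
        rw [h1] at hx
        exact_mod_cast hx
  obtain ⟨X₂, hX₂, p, hp0, hp1, h1, h2⟩ := hfrac
  obtain ⟨S, hS1, hS2⟩ := exists_partition_of_bias A hirr X Y X₂ hXY hdXY hX₂ p ε hp0 hp1 hε
    (by rw [← hmR]; exact hdeg)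
  rw [hout' _ sdiff_subset, hin' _ hX₂, ← hmR] at hS1
  rw [hout' _ hX₂, hin' _ sdiff_subset, ← hmR] at hS2
  refine ⟨S, Sᶜ, union_compl S, disjoint_compl_right, le_min ?_ ?_⟩ <;> linarith
end
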